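/- arXiv:1806.03571 — 5 statements merged into one kernel-verified Lean document; each statement's English description precedes it below -/
import Mathlib

section
/- For any two symmetric positive definite real r×r matrices A and B, det(A) · det(B) ≤ det((A+B)/2)². (In particular, the quantity 1 − det(AB)^{1/4}/det((A+B)/2)^{1/2} appearing in the Gaussian Hellinger distance formula is nonnegative.) -/
open Matrix

/-!
Suppose first that `A` is positive definite. Then `A` and `B` are simultaneously diagonal in a
suitable basis: `A = Pᴴ P` and `B = Pᴴ D P` with `D = diag(d)`, `d ≥ 0`. Congruence by `P`
multiplies all determinants by the same factor `|det P|²`, so the inequality reduces to the diagonal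
matrices `1` and `D`, where it is AM-GM, `1 * d i ≤ ((1 + d i) / 2) ^ 2`, in each coordinate.
If `A` is singular, the left-hand side vanishes.
-/

theorem prod_mul_prod_le_prod_half_add_sq {ι K : Type*} [Field K] [LinearOrder K]
    [IsStrictOrderedRing K] (s : Finset ι) {a b : ι → K} (ha : ∀ i ∈ s, 0 ≤ a i)
    (hb : ∀ i ∈ s, 0 ≤ b i) :
    (∏ i ∈ s, a i) * ∏ i ∈ s, b i ≤ (∏ i ∈ s, (a i + b i) / 2) ^ 2 := by
  rw [← Finset.prod_mul_distrib, ← Finset.prod_pow]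
  refine Finset.prod_le_prod (fun i hi ↦ mul_nonneg (ha i hi) (hb i hi)) fun i _ ↦ ?_
  linarith [four_mul_le_sq_add (a i) (b i)]

theorem half_smul_mul_add_mul_diagonal_mul {l m n K : Type*} [Fintype n] [DecidableEq n]
    [Semifield K] (P : Matrix l n K) (Q : Matrix n m K) (d : n → K) :
    ((1 : K) / 2) • (P * Q + P * diagonal d * Q) = P * diagonal (fun i ↦ (1 + d i) / 2) * Q := by
  have hdiag : diagonal (fun i ↦ (1 + d i) / 2) = ((1 : K) / 2) • (1 + diagonal d) := by
    rw [← diagonal_one, diagonal_add, ← diagonal_smul]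
    congr 1 with i
    rw [Pi.smul_apply, smul_eq_mul, one_div_mul_eq_div]
  rw [hdiag, Matrix.mul_smul, Matrix.smul_mul, Matrix.mul_add, Matrix.add_mul, Matrix.mul_one]

section RCLike

open scoped ComplexOrder

variable {n 𝕜 : Type*} [Fintype n] [DecidableEq n] [RCLike 𝕜] {A B : Matrix n n 𝕜}

theorem exists_isUnit_eq_conjTranspose_mul_diagonal_mul (hA : A.PosDef) (hB : B.IsHermitian) :
    ∃ (P : Matrix n n 𝕜) (d : n → ℝ),
      IsUnit P ∧ A = Pᴴ * P ∧ B = Pᴴ * diagonal (fun i ↦ (d i : 𝕜)) * P := by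
  obtain ⟨S, hS, rfl⟩ : ∃ S : Matrix n n 𝕜, IsUnit S ∧ A = Sᴴ * S := by
    open scoped MatrixOrder in
    exact CStarAlgebra.isStrictlyPositive_iff_eq_star_mul_self.mp hA.isStrictlyPositive
  obtain ⟨T, hTS⟩ := hS.exists_left_inv
  have hST : Sᴴ * Tᴴ = 1 := by rw [← conjTranspose_mul, hTS, conjTranspose_one]
  obtain ⟨U, d, hU, hTBT⟩ : ∃ (U : Matrix n n 𝕜) (d : n → ℝ), U * Uᴴ = 1 ∧
      Tᴴ * B * T = U * diagonal (fun i ↦ (d i : 𝕜)) * Uᴴ :=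
    have hC := isHermitian_conjTranspose_mul_mul T hB
    ⟨hC.eigenvectorUnitary, hC.eigenvalues, Unitary.coe_mul_star_self _, hC.spectral_theorem⟩
  refine ⟨Uᴴ * S, d, (IsUnit.of_mul_eq_one_right U hU).mul hS, ?_, ?_⟩
  · calc Sᴴ * S = Sᴴ * (U * Uᴴ) * S := by rw [hU, mul_one]
      _ = (Uᴴ * S)ᴴ * (Uᴴ * S) := by
        simp only [conjTranspose_mul, conjTranspose_conjTranspose, mul_assoc]
  · calc B = (Sᴴ * Tᴴ) * B * (T * S) := by rw [hST, hTS, one_mul, mul_one]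
      _ = Sᴴ * (Tᴴ * B * T) * S := by simp only [mul_assoc]
      _ = (Uᴴ * S)ᴴ * diagonal (fun i ↦ (d i : 𝕜)) * (Uᴴ * S) := by
        simp only [hTBT, conjTranspose_mul, conjTranspose_conjTranspose, mul_assoc]

theorem det_mul_det_le_det_half_add_sq_of_posDef (hA : A.PosDef) (hB : B.PosSemidef) :
    A.det * B.det ≤ (((1 : 𝕜) / 2) • (A + B)).det ^ 2 := by
  obtain ⟨P, d, hP, rfl, rfl⟩ :=
    exists_isUnit_eq_conjTranspose_mul_diagonal_mul hA hB.isHermitian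
  have hd (i : n) : 0 ≤ d i :=
    RCLike.ofReal_nonneg.mp
      (posSemidef_diagonal_iff.mp (hP.posSemidef_star_left_conjugate_iff.mp hB) i)
  have hprod : ∏ i, (d i : 𝕜) ≤ (∏ i, (1 + d i : 𝕜) / 2) ^ 2 := by
    have := prod_mul_prod_le_prod_half_add_sq Finset.univ (a := fun _ ↦ (1 : ℝ))
      (fun _ _ ↦ zero_le_one) (fun i _ ↦ hd i)
    rw [Finset.prod_const_one, one_mul] at this
    exact_mod_cast (RCLike.ofReal_le_ofReal (K := 𝕜)).mpr this
  have hdet : 0 ≤ (Pᴴ * P).det := hA.posSemidef.det_nonneg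
  calc (Pᴴ * P).det * (Pᴴ * diagonal (fun i ↦ (d i : 𝕜)) * P).det
      = (Pᴴ * P).det ^ 2 * ∏ i, (d i : 𝕜) := by simp only [det_mul, det_diagonal]; ring
    _ ≤ (Pᴴ * P).det ^ 2 * (∏ i, (1 + d i : 𝕜) / 2) ^ 2 :=
        mul_le_mul_of_nonneg_left hprod (pow_nonneg hdet 2)
    _ = _ := by rw [half_smul_mul_add_mul_diagonal_mul]; simp only [det_mul, det_diagonal]; ring

theorem stmt_1_general (hA : A.PosSemidef) (hB : B.PosSemidef) :
    A.det * B.det ≤ (((1 : 𝕜) / 2) • (A + B)).det ^ 2 := by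
  by_cases hdet : A.det = 0
  · have hmean : (((1 : 𝕜) / 2) • (A + B)).PosSemidef := (hA.add hB).smul (by positivity)
    rw [hdet, zero_mul]
    exact pow_nonneg hmean.det_nonneg 2
  · exact det_mul_det_le_det_half_add_sq_of_posDef (hA.posDef_iff_det_ne_zero.mpr hdet) hB

end RCLike

/-- For symmetric positive definite real `r × r` matrices `A` and `B`,
`det A · det B ≤ det((A+B)/2)²`. -/
theorem stmt_1 {r : ℕ} (A B : Matrix (Fin r) (Fin r) ℝ)
    (hA : A.PosDef) (hB : B.PosDef) :
    A.det * B.det ≤ (((1 : ℝ) / 2) • (A + B)).det ^ 2 :=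
  stmt_1_general hA.posSemidef hB.posSemidef
end

section
/- Let G₁ and G₂ be simple graphs on the vertex set {1,…,p} whose maximum vertex degree is at most d, with adjacency matrices E₁ and E₂. Let θ > 0 satisfy dθ < 1 and set J₁ = I + θE₁ and J₂ = I + θE₂. Then (1/2) Tr( (J₁ − J₂)(J₂⁻¹ − J₁⁻¹) ) ≤ p d ( θ/(1−dθ) )². -/
open Matrix

/-!
Write `D = J₁ - J₂`. Since `J₂⁻¹ - J₁⁻¹ = J₂⁻¹ D J₁⁻¹`, the trace equals `Tr((J₁⁻¹ D)(J₂⁻¹ D))`,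
which by Cauchy–Schwarz is at most `‖J₁⁻¹‖ ‖J₂⁻¹‖ ‖D‖_F²`, with operator norms on the inverses. The
Schur test bounds the operator norm of an adjacency matrix by the maximum degree, so the Neumann
series gives `‖Jᵢ⁻¹‖ ≤ 1 / (1 - dθ)`; and `D` has entries in `{0, ±θ}`, at most `2d` of them nonzero
in each row.
-/

section NormedRing

variable {R : Type*} [NormedRing R] [HasSummableGeomSeries R] {x : R}

lemma isUnit_one_add_of_norm_lt_one (hx : ‖x‖ < 1) : IsUnit (1 + x) := by
  simpa using isUnit_one_sub_of_norm_lt_one (x := -x) (by rwa [norm_neg])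

lemma norm_ringInverse_one_add_le (norm_one_le : ‖(1 : R)‖ ≤ 1) (hx : ‖x‖ < 1) :
    ‖Ring.inverse (1 + x)‖ ≤ (1 - ‖x‖)⁻¹ := by
  have norm_neg_lt : ‖-x‖ < 1 := by rwa [norm_neg]
  have neumann : Ring.inverse (1 + x) = ∑' k : ℕ, (-x) ^ k := by
    rw [← sub_neg_eq_add, NormedRing.inverse_one_sub _ norm_neg_lt]
    rfl
  calc ‖Ring.inverse (1 + x)‖
      ≤ ‖(1 : R)‖ - 1 + (1 - ‖x‖)⁻¹ := by
        rw [neumann, ← norm_neg x]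
        exact tsum_geometric_le_of_norm_lt_one (-x) norm_neg_lt
    _ ≤ (1 - ‖x‖)⁻¹ := by linarith

end NormedRing

section MatrixNorms

open scoped Matrix.Norms.L2Operator

variable {𝕜 l m n : Type*} [RCLike 𝕜] [Fintype l] [Fintype m] [Fintype n]

/-- The Frobenius norm of a matrix, as a function rather than a norm instance, because `‖·‖` denotes
the `ℓ²` operator norm of matrices here. -/
noncomputable def frobeniusNorm (M : Matrix m n 𝕜) : ℝ :=
  Matrix.frobeniusNormedAddCommGroup.norm M

lemma frobeniusNorm_eq_sqrt (M : Matrix m n 𝕜) :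
    frobeniusNorm M = √(∑ i, ∑ j, ‖M i j‖ ^ 2) := by
  rw [frobeniusNorm, Real.sqrt_eq_rpow]
  exact_mod_cast Matrix.frobenius_norm_def M

lemma frobeniusNorm_sq (M : Matrix m n 𝕜) : frobeniusNorm M ^ 2 = ∑ i, ∑ j, ‖M i j‖ ^ 2 := by
  rw [frobeniusNorm_eq_sqrt, Real.sq_sqrt (by positivity)]

lemma frobeniusNorm_nonneg (M : Matrix m n 𝕜) : 0 ≤ frobeniusNorm M :=
  frobeniusNorm_eq_sqrt M ▸ Real.sqrt_nonneg _

lemma frobeniusNorm_smul (a : 𝕜) (M : Matrix m n 𝕜) :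
    frobeniusNorm (a • M) = ‖a‖ * frobeniusNorm M :=
  Matrix.frobeniusNormSMulClass.norm_smul a M

lemma frobeniusNorm_mul_le_l2_opNorm_mul [DecidableEq m] (A : Matrix l m 𝕜) (M : Matrix m n 𝕜) :
    frobeniusNorm (A * M) ≤ ‖A‖ * frobeniusNorm M := by
  have column_le (j : n) : ∑ i, ‖(A * M) i j‖ ^ 2 ≤ ‖A‖ ^ 2 * ∑ i, ‖M i j‖ ^ 2 := by
    have := pow_le_pow_left₀ (norm_nonneg _) (A.l2_opNorm_mulVec (WithLp.toLp 2 (M.col j))) 2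
    rw [mul_pow, EuclideanSpace.norm_sq_eq, EuclideanSpace.norm_sq_eq] at this
    exact this
  refine le_of_sq_le_sq ?_ (mul_nonneg (norm_nonneg A) (frobeniusNorm_nonneg M))
  rw [mul_pow, frobeniusNorm_sq, frobeniusNorm_sq, Finset.sum_comm,
    Finset.sum_comm (f := fun i j ↦ ‖M i j‖ ^ 2), Finset.mul_sum]
  exact Finset.sum_le_sum fun j _ ↦ column_le j

lemma norm_trace_mul_le (X : Matrix m n 𝕜) (Y : Matrix n m 𝕜) :
    ‖(X * Y).trace‖ ≤ frobeniusNorm X * frobeniusNorm Y := by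
  calc ‖(X * Y).trace‖
      ≤ ∑ i, ∑ j, ‖X i j‖ * ‖Y j i‖ := by
        simp only [Matrix.trace, Matrix.diag_apply, Matrix.mul_apply, ← norm_mul]
        exact norm_sum_le_of_le _ fun i _ ↦ norm_sum_le _ _
    _ = ∑ ij : m × n, ‖X ij.1 ij.2‖ * ‖Y ij.2 ij.1‖ :=
        (Fintype.sum_prod_type' fun i j ↦ ‖X i j‖ * ‖Y j i‖).symm
    _ ≤ √(∑ ij : m × n, ‖X ij.1 ij.2‖ ^ 2) * √(∑ ij : m × n, ‖Y ij.2 ij.1‖ ^ 2) :=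
        Real.sum_mul_le_sqrt_mul_sqrt _ _ _
    _ = frobeniusNorm X * frobeniusNorm Y := by
        rw [frobeniusNorm_eq_sqrt, frobeniusNorm_eq_sqrt, Fintype.sum_prod_type,
          Fintype.sum_prod_type_right]

lemma norm_trace_sub_mul_inv_sub_inv_le [DecidableEq n] {A B : Matrix n n 𝕜}
    (h : IsUnit A ↔ IsUnit B) :
    ‖((A - B) * (B⁻¹ - A⁻¹)).trace‖ ≤ ‖A⁻¹‖ * ‖B⁻¹‖ * frobeniusNorm (A - B) ^ 2 := by
  have trace_eq : ((A - B) * (B⁻¹ - A⁻¹)).trace = ((A⁻¹ * (A - B)) * (B⁻¹ * (A - B))).trace := by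
    rw [Matrix.inv_sub_inv h.symm, ← Matrix.mul_assoc, Matrix.trace_mul_comm, Matrix.mul_assoc]
  calc ‖((A - B) * (B⁻¹ - A⁻¹)).trace‖
      ≤ frobeniusNorm (A⁻¹ * (A - B)) * frobeniusNorm (B⁻¹ * (A - B)) :=
        trace_eq ▸ norm_trace_mul_le _ _
    _ ≤ (‖A⁻¹‖ * frobeniusNorm (A - B)) * (‖B⁻¹‖ * frobeniusNorm (A - B)) :=
        mul_le_mul (frobeniusNorm_mul_le_l2_opNorm_mul _ _) (frobeniusNorm_mul_le_l2_opNorm_mul _ _)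
          (frobeniusNorm_nonneg _) (mul_nonneg (norm_nonneg _) (frobeniusNorm_nonneg _))
    _ = ‖A⁻¹‖ * ‖B⁻¹‖ * frobeniusNorm (A - B) ^ 2 := by ring

lemma norm_dotProduct_sq_le (a x : n → 𝕜) :
    ‖a ⬝ᵥ x‖ ^ 2 ≤ (∑ j, ‖a j‖) * ∑ j, ‖a j‖ * ‖x j‖ ^ 2 := by
  calc ‖a ⬝ᵥ x‖ ^ 2
      ≤ (∑ j, ‖a j‖ * ‖x j‖) ^ 2 := by
        gcongr
        exact norm_sum_le_of_le _ fun j _ ↦ norm_mul_le _ _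
    _ ≤ (∑ j, ‖a j‖) * ∑ j, ‖a j‖ * ‖x j‖ ^ 2 :=
        Finset.sum_sq_le_sum_mul_sum_of_sq_le_mul _ (fun _ _ ↦ by positivity)
          (fun _ _ ↦ by positivity) fun _ _ ↦ le_of_eq (by ring)

/-- The Schur test. -/
lemma l2_opNorm_le_sqrt_of_sum_norm_le [DecidableEq n] {A : Matrix m n 𝕜} {r c : ℝ} (hr : 0 ≤ r)
    (row_le : ∀ i, ∑ j, ‖A i j‖ ≤ r) (col_le : ∀ j, ∑ i, ‖A i j‖ ≤ c) :
    ‖A‖ ≤ √(r * c) := by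
  refine ContinuousLinearMap.opNorm_le_bound _ (Real.sqrt_nonneg _) fun x ↦ ?_
  change ‖WithLp.toLp 2 (A *ᵥ x.ofLp)‖ ≤ _
  have norm_sq_le : ‖WithLp.toLp 2 (A *ᵥ x.ofLp)‖ ^ 2 ≤ r * c * ‖x‖ ^ 2 := by
    calc ‖WithLp.toLp 2 (A *ᵥ x.ofLp)‖ ^ 2
        ≤ ∑ i, (∑ j, ‖A i j‖) * ∑ j, ‖A i j‖ * ‖x j‖ ^ 2 := by
          rw [EuclideanSpace.norm_sq_eq]
          exact Finset.sum_le_sum fun i _ ↦ norm_dotProduct_sq_le (A i) x.ofLp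
      _ ≤ ∑ i, r * ∑ j, ‖A i j‖ * ‖x j‖ ^ 2 := by
          gcongr with i
          exact row_le i
      _ = r * ∑ j, (∑ i, ‖A i j‖) * ‖x j‖ ^ 2 := by
          rw [← Finset.mul_sum, Finset.sum_comm]
          simp only [Finset.sum_mul]
      _ ≤ r * ∑ j, c * ‖x j‖ ^ 2 := by
          gcongr with j
          exact col_le j
      _ = r * c * ‖x‖ ^ 2 := by
          rw [EuclideanSpace.norm_sq_eq, ← Finset.mul_sum, mul_assoc]
  calc ‖WithLp.toLp 2 (A *ᵥ x.ofLp)‖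
      ≤ √(r * c * ‖x‖ ^ 2) := Real.le_sqrt_of_sq_le norm_sq_le
    _ = √(r * c) * ‖x‖ := by rw [Real.sqrt_mul' _ (sq_nonneg _), Real.sqrt_sq (norm_nonneg x)]

lemma l2_opNorm_one_le [DecidableEq n] : ‖(1 : Matrix n n 𝕜)‖ ≤ 1 := by
  rw [← Matrix.diagonal_one, Matrix.l2_opNorm_diagonal]
  exact (pi_norm_le_iff_of_nonneg zero_le_one).2 fun _ ↦ norm_one.le

end MatrixNorms

section AdjMatrix

open scoped Matrix.Norms.L2Operator

variable {𝕜 V : Type*} [RCLike 𝕜] [Fintype V]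

lemma sum_norm_adjMatrix_apply (G : SimpleGraph V) [DecidableRel G.Adj] (v : V) :
    ∑ w, ‖G.adjMatrix 𝕜 v w‖ = G.degree v := by
  simp [SimpleGraph.adjMatrix_apply, apply_ite norm, ← SimpleGraph.card_neighborFinset_eq_degree,
    SimpleGraph.neighborFinset_eq_filter]

lemma l2_opNorm_adjMatrix_le [DecidableEq V] {G : SimpleGraph V} [DecidableRel G.Adj] {d : ℕ}
    (hd : ∀ v, G.degree v ≤ d) : ‖G.adjMatrix 𝕜‖ ≤ d := by
  have row_le (v : V) : ∑ w, ‖G.adjMatrix 𝕜 v w‖ ≤ d := by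
    rw [sum_norm_adjMatrix_apply]
    exact_mod_cast hd v
  have col_le (w : V) : ∑ v, ‖G.adjMatrix 𝕜 v w‖ ≤ d := by
    simpa only [G.isSymm_adjMatrix.apply w] using row_le w
  simpa using l2_opNorm_le_sqrt_of_sum_norm_le d.cast_nonneg row_le col_le

lemma frobeniusNorm_adjMatrix_sub_sq_le (G₁ G₂ : SimpleGraph V) [DecidableRel G₁.Adj]
    [DecidableRel G₂.Adj] :
    frobeniusNorm (G₁.adjMatrix 𝕜 - G₂.adjMatrix 𝕜) ^ 2 ≤ ∑ v, (G₁.degree v + G₂.degree v : ℝ) := by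
  have entry_le (v w : V) : ‖(G₁.adjMatrix 𝕜 - G₂.adjMatrix 𝕜) v w‖ ^ 2 ≤
      ‖G₁.adjMatrix 𝕜 v w‖ + ‖G₂.adjMatrix 𝕜 v w‖ := by
    simp only [Matrix.sub_apply, SimpleGraph.adjMatrix_apply]
    split_ifs <;> simp
  rw [frobeniusNorm_sq]
  simp only [← sum_norm_adjMatrix_apply (𝕜 := 𝕜), ← Finset.sum_add_distrib]
  exact Finset.sum_le_sum fun v _ ↦ Finset.sum_le_sum fun w _ ↦ entry_le v w

lemma frobeniusNorm_adjMatrix_sub_sq_le_card_mul {G₁ G₂ : SimpleGraph V} [DecidableRel G₁.Adj]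
    [DecidableRel G₂.Adj] {d : ℕ} (hd₁ : ∀ v, G₁.degree v ≤ d) (hd₂ : ∀ v, G₂.degree v ≤ d) :
    frobeniusNorm (G₁.adjMatrix 𝕜 - G₂.adjMatrix 𝕜) ^ 2 ≤ Fintype.card V * (2 * d) := by
  calc frobeniusNorm (G₁.adjMatrix 𝕜 - G₂.adjMatrix 𝕜) ^ 2
      ≤ ∑ v, (G₁.degree v + G₂.degree v : ℝ) := frobeniusNorm_adjMatrix_sub_sq_le G₁ G₂
    _ ≤ ∑ _v : V, (d + d : ℝ) := by
        gcongr with v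
        exacts [hd₁ v, hd₂ v]
    _ = Fintype.card V * (2 * d) := by
        rw [Finset.sum_const, Finset.card_univ, nsmul_eq_mul, two_mul]

lemma l2_opNorm_smul_adjMatrix_le [DecidableEq V] {G : SimpleGraph V} [DecidableRel G.Adj] {d : ℕ}
    (θ : 𝕜) (hd : ∀ v, G.degree v ≤ d) : ‖θ • G.adjMatrix 𝕜‖ ≤ d * ‖θ‖ := by
  rw [norm_smul, mul_comm]
  gcongr
  exact l2_opNorm_adjMatrix_le hd

lemma l2_opNorm_inv_one_add_smul_adjMatrix_le [DecidableEq V] {G : SimpleGraph V}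
    [DecidableRel G.Adj] {d : ℕ} {θ : 𝕜} (hdθ : d * ‖θ‖ < 1) (hd : ∀ v, G.degree v ≤ d) :
    ‖(1 + θ • G.adjMatrix 𝕜)⁻¹‖ ≤ (1 - d * ‖θ‖)⁻¹ := by
  have norm_le := l2_opNorm_smul_adjMatrix_le θ hd
  rw [Matrix.nonsing_inv_eq_ringInverse]
  refine (norm_ringInverse_one_add_le l2_opNorm_one_le (norm_le.trans_lt hdθ)).trans ?_
  gcongr

theorem stmt_3_general [DecidableEq V] {d : ℕ} {θ : 𝕜} (hdθ : d * ‖θ‖ < 1)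
    {G₁ G₂ : SimpleGraph V} [DecidableRel G₁.Adj] [DecidableRel G₂.Adj]
    (hd₁ : ∀ v, G₁.degree v ≤ d) (hd₂ : ∀ v, G₂.degree v ≤ d) :
    ‖(1 / 2) * Matrix.trace
        (((1 + θ • G₁.adjMatrix 𝕜) - (1 + θ • G₂.adjMatrix 𝕜)) *
          ((1 + θ • G₂.adjMatrix 𝕜)⁻¹ - (1 + θ • G₁.adjMatrix 𝕜)⁻¹))‖ ≤
      Fintype.card V * d * (‖θ‖ / (1 - d * ‖θ‖)) ^ 2 := by
  have isUnit₁ := isUnit_one_add_of_norm_lt_one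
    ((l2_opNorm_smul_adjMatrix_le θ hd₁).trans_lt hdθ)
  have isUnit₂ := isUnit_one_add_of_norm_lt_one
    ((l2_opNorm_smul_adjMatrix_le θ hd₂).trans_lt hdθ)
  have trace_le := norm_trace_sub_mul_inv_sub_inv_le (iff_of_true isUnit₁ isUnit₂)
  set J₁ := 1 + θ • G₁.adjMatrix 𝕜
  set J₂ := 1 + θ • G₂.adjMatrix 𝕜
  have sub_eq : J₁ - J₂ = θ • (G₁.adjMatrix 𝕜 - G₂.adjMatrix 𝕜) := by
    rw [add_sub_add_left_eq_sub, smul_sub]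
  calc ‖(1 / 2) * ((J₁ - J₂) * (J₂⁻¹ - J₁⁻¹)).trace‖
      = 1 / 2 * ‖((J₁ - J₂) * (J₂⁻¹ - J₁⁻¹)).trace‖ := by simp
    _ ≤ 1 / 2 * (‖J₁⁻¹‖ * ‖J₂⁻¹‖ * frobeniusNorm (J₁ - J₂) ^ 2) := by gcongr
    _ = 1 / 2 * (‖J₁⁻¹‖ * ‖J₂⁻¹‖ *
          (‖θ‖ ^ 2 * frobeniusNorm (G₁.adjMatrix 𝕜 - G₂.adjMatrix 𝕜) ^ 2)) := by
        rw [sub_eq, frobeniusNorm_smul, mul_pow]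
    _ ≤ 1 / 2 * ((1 - d * ‖θ‖)⁻¹ * (1 - d * ‖θ‖)⁻¹ *
          (‖θ‖ ^ 2 * (Fintype.card V * (2 * d)))) := by
        have := sub_pos.2 hdθ
        gcongr
        exacts [l2_opNorm_inv_one_add_smul_adjMatrix_le hdθ hd₁,
          l2_opNorm_inv_one_add_smul_adjMatrix_le hdθ hd₂,
          frobeniusNorm_adjMatrix_sub_sq_le_card_mul hd₁ hd₂]
    _ = Fintype.card V * d * (‖θ‖ / (1 - d * ‖θ‖)) ^ 2 := by ring

end AdjMatrix

/-- Bound on the symmetrized KL divergence between two Gaussian graphical models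
`J₁ = I + θE₁`, `J₂ = I + θE₂` on graphs of maximum degree at most `d`, with `dθ < 1`:
`(1/2) Tr((J₁ − J₂)(J₂⁻¹ − J₁⁻¹)) ≤ p d (θ/(1−dθ))²`. -/
theorem stmt_3 {p : ℕ} (d : ℕ) (θ : ℝ) (hθ : 0 < θ) (hdθ : (d : ℝ) * θ < 1)
    (G₁ G₂ : SimpleGraph (Fin p)) [DecidableRel G₁.Adj] [DecidableRel G₂.Adj]
    (hd₁ : ∀ v, G₁.degree v ≤ d) (hd₂ : ∀ v, G₂.degree v ≤ d) :
    (1 / 2) * Matrix.trace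
        (((1 + θ • G₁.adjMatrix ℝ) - (1 + θ • G₂.adjMatrix ℝ)) *
          ((1 + θ • G₂.adjMatrix ℝ)⁻¹ - (1 + θ • G₁.adjMatrix ℝ)⁻¹)) ≤
      (p : ℝ) * d * (θ / (1 - d * θ)) ^ 2 := by
  refine (Real.le_norm_self _).trans ?_
  simpa only [Real.norm_of_nonneg hθ.le, Fintype.card_fin] using
    stmt_3_general (𝕜 := ℝ) (θ := θ) (by rwa [Real.norm_of_nonneg hθ.le]) hd₁ hd₂
end

section
/- (Fano's inequality, version used in the paper.) Let μ₁,…,μ_M (M ≥ 2) be probability measures on a measurable space Ω that are pairwise mutually absolutely continuous with finite pairwise Kullback–Leibler divergences, let n ≥ 1, let δ ∈ (0,1), and let ψ : Ωⁿ → {1,…,M} be any measurable decoder. Write S(μ_i‖μ_j) = D(μ_i‖μ_j) + D(μ_j‖μ_i) for the symmetrized KL divergence. If n < (1−δ) · log M / ( (2/M²) Σ_{i=1}^{M} Σ_{j=i+1}^{M} S(μ_i‖μ_j) ), then max_{1≤j≤M} μ_j^{⊗n}[ ψ ≠ j ] ≥ δ − 1/log M, where μ_j^{⊗n} denotes the n-fold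 product measure (i.i.d. samples from μ_j). -/
open MeasureTheory

/-- The Kullback–Leibler divergence `D(μ‖ν) = ∫ log(dμ/dν) dμ` (natural logarithm),
for `μ ≪ ν`. -/
noncomputable def KLdiv {Ω : Type*} [MeasurableSpace Ω] (μ ν : Measure Ω) : ℝ :=
  ∫ x, Real.log (μ.rnDeriv ν x).toReal ∂μ

/-- The symmetrized Kullback–Leibler divergence `S(μ‖ν) = D(μ‖ν) + D(ν‖μ)`. -/
noncomputable def symKLdiv {Ω : Type*} [MeasurableSpace Ω] (μ ν : Measure Ω) : ℝ :=
  KLdiv μ ν + KLdiv ν μ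

/-! The Donsker–Varadhan inequality `∫ f dμ ≤ D(μ‖ν) + log ∫ exp f dν` is the nonnegativity of the
divergence of `μ` from `ν` tilted by `f`. For `f = log M` on `A` and `0` off `A` it gives
`μ(A) log M ≤ D(μ‖ν) + (M - 1) ν(A)`. Take `μ = P i`, `ν = P j`, `A = {ψ = i}` and average over all
pairs `(i, j)`: the events `{ψ = i}` partition the space, so the last terms average to
`(M - 1) / M ≤ 1`, and the average success probability times `log M` is at most one plus the mean
divergence. On product spaces the divergence is additive, which brings in the factor `n`. -/

section Divergence

variable {X : Type*} [MeasurableSpace X] {μ ν : Measure X} [IsProbabilityMeasure μ]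
  [IsProbabilityMeasure ν]

theorem KLdiv_eq_toReal_klDiv (hμν : μ ≪ ν) : KLdiv μ ν = (InformationTheory.klDiv μ ν).toReal :=
  (InformationTheory.toReal_klDiv_of_measure_eq hμν (by simp)).symm

theorem KLdiv_nonneg (hμν : μ ≪ ν) : 0 ≤ KLdiv μ ν :=
  KLdiv_eq_toReal_klDiv hμν ▸ ENNReal.toReal_nonneg

theorem KLdiv_self (μ : Measure X) [SigmaFinite μ] : KLdiv μ μ = 0 :=
  (integral_congr_ae (llr_self μ)).trans (integral_zero X ℝ)

theorem integral_le_KLdiv_add_log_integral_exp {f : X → ℝ} (hμν : μ ≪ ν)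
    (h_int : Integrable (llr μ ν) μ) (hfμ : Integrable f μ)
    (hfν : Integrable (fun x ↦ Real.exp (f x)) ν) :
    ∫ x, f x ∂μ ≤ KLdiv μ ν + Real.log (∫ x, Real.exp (f x) ∂ν) := by
  have : IsProbabilityMeasure (ν.tilted f) := isProbabilityMeasure_tilted hfν
  have tilted_nonneg : 0 ≤ KLdiv μ (ν.tilted f) :=
    KLdiv_nonneg (hμν.trans (absolutelyContinuous_tilted hfν))
  have tilted_eq : KLdiv μ (ν.tilted f) =
      KLdiv μ ν - ∫ x, f x ∂μ + Real.log (∫ x, Real.exp (f x) ∂ν) :=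
    integral_llr_tilted_right hμν hfμ hfν h_int
  linarith

theorem measureReal_mul_log_le {A : Set X} {m : ℝ} (hμν : μ ≪ ν)
    (h_int : Integrable (llr μ ν) μ) (hA : MeasurableSet A) (hm : 0 < m) :
    μ.real A * Real.log m ≤ KLdiv μ ν + (m - 1) * ν.real A := by
  set f : X → ℝ := A.indicator fun _ ↦ Real.log m
  have exp_f : (fun x ↦ Real.exp (f x)) = fun x ↦ 1 + A.indicator (fun _ ↦ m - 1) x := by
    ext x
    by_cases hx : x ∈ A <;> simp [f, hx, Real.exp_log hm]
  have integrable_ind : Integrable (A.indicator fun _ ↦ m - 1) ν :=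
    (integrable_const _).indicator hA
  have integrable_exp : Integrable (fun x ↦ Real.exp (f x)) ν :=
    exp_f ▸ (integrable_const 1).add integrable_ind
  have integral_exp : ∫ x, Real.exp (f x) ∂ν = 1 + (m - 1) * ν.real A := by
    rw [exp_f, integral_add (integrable_const 1) integrable_ind, integral_indicator_const _ hA]
    simp [mul_comm]
  calc μ.real A * Real.log m = ∫ x, f x ∂μ := (integral_indicator_const _ hA).symm
    _ ≤ KLdiv μ ν + Real.log (∫ x, Real.exp (f x) ∂ν) :=
      integral_le_KLdiv_add_log_integral_exp hμν h_int ((integrable_const _).indicator hA)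
        integrable_exp
    _ ≤ KLdiv μ ν + (∫ x, Real.exp (f x) ∂ν - 1) := by
      gcongr
      exact Real.log_le_sub_one_of_pos (integral_exp_pos integrable_exp)
    _ = KLdiv μ ν + (m - 1) * ν.real A := by rw [integral_exp, add_sub_cancel_left]

end Divergence

section Product

variable {κ : Type*} [Fintype κ] {X : κ → Type*} [∀ k, MeasurableSpace (X k)]

theorem lintegral_pi_prod_eq_prod_lintegral (ν : ∀ k, Measure (X k))
    [∀ k, IsProbabilityMeasure (ν k)] {f : ∀ k, X k → ENNReal} (hf : ∀ k, Measurable (f k)) :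
    ∫⁻ x, ∏ k, f k (x k) ∂Measure.pi ν = ∏ k, ∫⁻ y, f k y ∂ν k := by
  rw [ProbabilityTheory.lintegral_prod_eq_prod_lintegral_of_indepFun Finset.univ _
    (ProbabilityTheory.iIndepFun_pi fun k ↦ (hf k).aemeasurable) fun k ↦ by fun_prop]
  exact Finset.prod_congr rfl fun k _ ↦ (measurePreserving_eval ν k).lintegral_comp (hf k)

theorem pi_withDensity (ν : ∀ k, Measure (X k)) [∀ k, IsProbabilityMeasure (ν k)]
    {f : ∀ k, X k → ENNReal} (hf : ∀ k, Measurable (f k))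
    [∀ k, SigmaFinite ((ν k).withDensity (f k))] :
    Measure.pi (fun k ↦ (ν k).withDensity (f k)) =
      (Measure.pi ν).withDensity fun x ↦ ∏ k, f k (x k) := by
  refine Measure.pi_eq fun s hs ↦ ?_
  have indicator_prod : (Set.univ.pi s).indicator (fun x ↦ ∏ k, f k (x k)) =
      fun x ↦ ∏ k, (s k).indicator (f k) (x k) := by
    classical
    ext x
    simp only [Set.indicator_apply, Set.mem_univ_pi, Finset.prod_ite_zero, Finset.mem_univ,
      true_imp_iff]
  rw [withDensity_apply _ (.univ_pi hs), ← lintegral_indicator (.univ_pi hs), indicator_prod,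
    lintegral_pi_prod_eq_prod_lintegral ν fun k ↦ (hf k).indicator (hs k)]
  exact Finset.prod_congr rfl fun k _ ↦ by
    rw [lintegral_indicator (hs k), withDensity_apply _ (hs k)]

variable {μ ν : ∀ k, Measure (X k)} [∀ k, IsProbabilityMeasure (ν k)]

theorem pi_eq_withDensity_rnDeriv [∀ k, SigmaFinite (μ k)] (hμν : ∀ k, μ k ≪ ν k) :
    Measure.pi μ = (Measure.pi ν).withDensity fun x ↦ ∏ k, (μ k).rnDeriv (ν k) (x k) := by
  have withDensity_eq (k) : (ν k).withDensity ((μ k).rnDeriv (ν k)) = μ k :=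
    Measure.withDensity_rnDeriv_eq _ _ (hμν k)
  rw [← pi_withDensity ν fun k ↦ Measure.measurable_rnDeriv _ _]
  simp only [withDensity_eq]

theorem pi_absolutelyContinuous [∀ k, SigmaFinite (μ k)] (hμν : ∀ k, μ k ≪ ν k) :
    Measure.pi μ ≪ Measure.pi ν := by
  rw [pi_eq_withDensity_rnDeriv hμν]
  exact withDensity_absolutelyContinuous _ _

theorem rnDeriv_pi [∀ k, SigmaFinite (μ k)] (hμν : ∀ k, μ k ≪ ν k) :
    (Measure.pi μ).rnDeriv (Measure.pi ν) =ᵐ[Measure.pi ν]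
      fun x ↦ ∏ k, (μ k).rnDeriv (ν k) (x k) := by
  rw [pi_eq_withDensity_rnDeriv hμν]
  exact Measure.rnDeriv_withDensity _ (by fun_prop)

theorem llr_pi [∀ k, SigmaFinite (μ k)] (hμν : ∀ k, μ k ≪ ν k) :
    llr (Measure.pi μ) (Measure.pi ν) =ᵐ[Measure.pi μ] fun x ↦ ∑ k, llr (μ k) (ν k) (x k) := by
  have coord_ne_zero : ∀ᵐ x ∂Measure.pi μ, ∀ k, ((μ k).rnDeriv (ν k) (x k)).toReal ≠ 0 := by
    refine ae_all_iff.2 fun k ↦ Measure.tendsto_eval_ae_ae.eventually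
      (p := fun y ↦ ((μ k).rnDeriv (ν k) y).toReal ≠ 0) ?_
    filter_upwards [Measure.rnDeriv_pos (hμν k), (hμν k).ae_le (Measure.rnDeriv_lt_top (μ k) (ν k))]
      with y hpos hlt using (ENNReal.toReal_pos hpos.ne' hlt.ne).ne'
  filter_upwards [(pi_absolutelyContinuous hμν).ae_le (rnDeriv_pi hμν), coord_ne_zero]
    with x hx hne
  simp only [llr, hx, ENNReal.toReal_prod, Real.log_prod fun k _ ↦ hne k]

variable [∀ k, IsProbabilityMeasure (μ k)]

theorem integrable_llr_pi (hμν : ∀ k, μ k ≪ ν k)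
    (h_int : ∀ k, Integrable (llr (μ k) (ν k)) (μ k)) :
    Integrable (llr (Measure.pi μ) (Measure.pi ν)) (Measure.pi μ) :=
  (integrable_congr (llr_pi hμν)).2
    (integrable_finsetSum _ fun k _ ↦ integrable_comp_eval (h_int k))

theorem KLdiv_pi (hμν : ∀ k, μ k ≪ ν k) (h_int : ∀ k, Integrable (llr (μ k) (ν k)) (μ k)) :
    KLdiv (Measure.pi μ) (Measure.pi ν) = ∑ k, KLdiv (μ k) (ν k) :=
  calc KLdiv (Measure.pi μ) (Measure.pi ν)
    _ = ∫ x, ∑ k, llr (μ k) (ν k) (x k) ∂Measure.pi μ := integral_congr_ae (llr_pi hμν)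
    _ = ∑ k, ∫ x, llr (μ k) (ν k) (x k) ∂Measure.pi μ :=
      integral_finsetSum _ fun k _ ↦ integrable_comp_eval (h_int k)
    _ = ∑ k, KLdiv (μ k) (ν k) :=
      Finset.sum_congr rfl fun k _ ↦ integral_comp_eval (h_int k).aestronglyMeasurable

end Product

section Fano

open scoped BigOperators

variable {X ι : Type*} [MeasurableSpace X] [Fintype ι]

/-- The average divergence `D(P i‖P j)` over all ordered pairs `(i, j)`, the diagonal included. -/
noncomputable def meanKLdiv (P : ι → Measure X) : ℝ :=
  𝔼 i, 𝔼 j, KLdiv (P i) (P j)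

/-- The probability that the decoder `ψ` errs when the true index is uniformly distributed. -/
noncomputable def averageError (P : ι → Measure X) (ψ : X → ι) : ℝ :=
  𝔼 i, (P i).real {x | ψ x ≠ i}

theorem meanKLdiv_eq_sum_symKLdiv_div [LinearOrder ι] [LocallyFiniteOrderTop ι]
    [LocallyFiniteOrderBot ι] (P : ι → Measure X) [∀ i, SigmaFinite (P i)] :
    meanKLdiv P = (∑ i, ∑ j with i < j, symKLdiv (P i) (P j)) / (Fintype.card ι : ℝ) ^ 2 := by
  have add_diagonal (i) : ∑ j ∈ {i}ᶜ, KLdiv (P i) (P j) = ∑ j, KLdiv (P i) (P j) := by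
    rw [Finset.compl_singleton,
      Finset.sum_erase (f := fun j ↦ KLdiv (P i) (P j)) _ (KLdiv_self (P i))]
  have sum_pairs : ∑ i, ∑ j with i < j, symKLdiv (P i) (P j) = ∑ i, ∑ j, KLdiv (P i) (P j) := by
    simp only [symKLdiv, Finset.filter_lt_eq_Ioi, ← add_diagonal]
    exact Finset.sum_sum_Ioi_add_eq_sum_sum_off_diag fun j i ↦ KLdiv (P i) (P j)
  simp only [sum_pairs, meanKLdiv, Fintype.expect_eq_sum_div_card, ← Finset.sum_div, div_div, sq]

theorem meanKLdiv_nonneg {P : ι → Measure X} [∀ i, IsProbabilityMeasure (P i)]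
    (hac : ∀ i j, P i ≪ P j) : 0 ≤ meanKLdiv P :=
  Finset.expect_nonneg fun _ _ ↦ Finset.expect_nonneg fun _ _ ↦ KLdiv_nonneg (hac _ _)

theorem mul_meanKLdiv_le_of_le_div [LinearOrder ι] [LocallyFiniteOrderTop ι]
    [LocallyFiniteOrderBot ι] {P : ι → Measure X} [∀ i, IsProbabilityMeasure (P i)]
    (hac : ∀ i j, P i ≪ P j) {t a : ℝ} (ht : 0 ≤ t) (ha : 0 ≤ a)
    (h : t ≤ a / (2 / (Fintype.card ι : ℝ) ^ 2 * ∑ i, ∑ j with i < j, symKLdiv (P i) (P j))) :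
    t * meanKLdiv P ≤ a := by
  have mean_nonneg : 0 ≤ meanKLdiv P := meanKLdiv_nonneg hac
  have denominator_eq : 2 / (Fintype.card ι : ℝ) ^ 2 * ∑ i, ∑ j with i < j, symKLdiv (P i) (P j) =
      2 * meanKLdiv P := by
    rw [meanKLdiv_eq_sum_symKLdiv_div, div_mul_eq_mul_div, mul_div_assoc]
  calc t * meanKLdiv P ≤ t * (2 * meanKLdiv P) := by gcongr; linarith
    _ ≤ a := mul_le_of_le_div₀ ha (by positivity) (denominator_eq ▸ h)

theorem meanKLdiv_pi {κ : Type*} [Fintype κ] {P : ι → Measure X} [∀ i, IsProbabilityMeasure (P i)]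
    (hac : ∀ i j, P i ≪ P j) (h_int : ∀ i j, Integrable (llr (P i) (P j)) (P i)) :
    meanKLdiv (fun i ↦ Measure.pi fun _ : κ ↦ P i) = Fintype.card κ * meanKLdiv P := by
  simp only [meanKLdiv, KLdiv_pi (fun _ ↦ hac _ _) (fun _ ↦ h_int _ _), Finset.sum_const,
    Finset.card_univ, nsmul_eq_mul, Finset.mul_expect]

variable [MeasurableSpace ι] [MeasurableSingletonClass ι] {P : ι → Measure X}
  [∀ i, IsProbabilityMeasure (P i)] {ψ : X → ι}

theorem one_sub_averageError [Nonempty ι] (hψ : Measurable ψ) :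
    1 - averageError P ψ = 𝔼 i, (P i).real (ψ ⁻¹' {i}) := by
  have success (i) : (P i).real (ψ ⁻¹' {i}) = 1 - (P i).real {x | ψ x ≠ i} :=
    eq_sub_of_add_eq (probReal_add_probReal_compl (hψ (measurableSet_singleton i)))
  simp only [averageError, success, Finset.expect_sub_distrib, Fintype.expect_const]

theorem expect_expect_measureReal_preimage_singleton [Nonempty ι] (hψ : Measurable ψ) :
    𝔼 i, 𝔼 j, (P j).real (ψ ⁻¹' {i}) = 1 / Fintype.card ι := by
  have partition (j) : ∑ i, (P j).real (ψ ⁻¹' {i}) = 1 := by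
    simpa using sum_measureReal_preimage_singleton (μ := P j) Finset.univ
      fun i _ ↦ hψ (measurableSet_singleton i)
  rw [Finset.expect_comm]
  simp only [Fintype.expect_eq_sum_div_card (fun i ↦ (P _).real (ψ ⁻¹' {i})), partition,
    Fintype.expect_const]

theorem one_sub_averageError_mul_log_card_le [Nonempty ι] (hac : ∀ i j, P i ≪ P j)
    (h_int : ∀ i j, Integrable (llr (P i) (P j)) (P i)) (hψ : Measurable ψ) :
    (1 - averageError P ψ) * Real.log (Fintype.card ι) ≤ meanKLdiv P + 1 := by
  have card_pos : 0 < (Fintype.card ι : ℝ) := Nat.cast_pos.2 Fintype.card_pos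
  calc (1 - averageError P ψ) * Real.log (Fintype.card ι)
    _ = 𝔼 i, 𝔼 _j : ι, (P i).real (ψ ⁻¹' {i}) * Real.log (Fintype.card ι) := by
      simp only [one_sub_averageError hψ, Finset.expect_mul, Fintype.expect_const]
    _ ≤ 𝔼 i, 𝔼 j, (KLdiv (P i) (P j) + (Fintype.card ι - 1) * (P j).real (ψ ⁻¹' {i})) :=
      Finset.expect_le_expect fun i _ ↦ Finset.expect_le_expect fun j _ ↦
        measureReal_mul_log_le (hac i j) (h_int i j) (hψ (measurableSet_singleton i)) card_pos
    _ = meanKLdiv P + (Fintype.card ι - 1) * (1 / Fintype.card ι) := by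
      simp only [Finset.expect_add_distrib, ← Finset.mul_expect, meanKLdiv,
        expect_expect_measureReal_preimage_singleton hψ]
    _ ≤ meanKLdiv P + 1 := by
      rw [mul_one_div]
      gcongr
      exact div_le_one_of_le₀ (sub_le_self _ zero_le_one) card_pos.le

theorem exists_le_measure_ne_of_meanKLdiv_le [Nontrivial ι] (hac : ∀ i j, P i ≪ P j)
    (h_int : ∀ i j, Integrable (llr (P i) (P j)) (P i)) (hψ : Measurable ψ) {δ : ℝ}
    (hδ : meanKLdiv P ≤ (1 - δ) * Real.log (Fintype.card ι)) :
    ∃ j, ENNReal.ofReal (δ - 1 / Real.log (Fintype.card ι)) ≤ P j {x | ψ x ≠ j} := by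
  have log_pos : 0 < Real.log (Fintype.card ι) :=
    Real.log_pos (Nat.one_lt_cast.2 Fintype.one_lt_card)
  have le_averageError : δ - 1 / Real.log (Fintype.card ι) ≤ averageError P ψ := by
    rw [sub_le_iff_le_add, ← sub_le_iff_le_add', le_div_iff₀ log_pos]
    linarith [one_sub_averageError_mul_log_card_le hac h_int hψ]
  obtain ⟨j, -, hj⟩ := Finset.exists_le_of_le_expect Finset.univ_nonempty le_averageError
  exact ⟨j, ENNReal.ofReal_le_of_le_toReal hj⟩

end Fano

theorem stmt_5_general {Ω ι : Type*} [MeasurableSpace Ω] [Fintype ι] [Nontrivial ι]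
    [MeasurableSpace ι] [MeasurableSingletonClass ι] (n : ℕ) (μ : ι → Measure Ω)
    [∀ j, IsProbabilityMeasure (μ j)] (hac : ∀ i j, μ i ≪ μ j)
    (hfin : ∀ i j, Integrable (fun x ↦ Real.log ((μ i).rnDeriv (μ j) x).toReal) (μ i)) (δ : ℝ)
    (ψ : (Fin n → Ω) → ι) (hψ : Measurable ψ)
    (hcond : n * meanKLdiv μ ≤ (1 - δ) * Real.log (Fintype.card ι)) :
    ∃ j, ENNReal.ofReal (δ - 1 / Real.log (Fintype.card ι)) ≤
      (Measure.pi fun _ : Fin n ↦ μ j) {x | ψ x ≠ j} :=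
  exists_le_measure_ne_of_meanKLdiv_le
    (fun _ _ ↦ pi_absolutelyContinuous fun _ ↦ hac _ _)
    (fun _ _ ↦ integrable_llr_pi (fun _ ↦ hac _ _) fun _ ↦ hfin _ _) hψ
    (by simpa only [meanKLdiv_pi hac hfin, Fintype.card_fin] using hcond)

/-- Fano's inequality, version used in the paper: if
`n < (1−δ) log M / ((2/M²) Σ_{i<j} S(μ_i‖μ_j))`, then every measurable decoder
`ψ : Ωⁿ → {1,…,M}` is `δ`-unreliable, i.e. `max_j μ_j^{⊗n}[ψ ≠ j] ≥ δ − 1/log M`. -/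
theorem stmt_5 {Ω : Type*} [MeasurableSpace Ω] (M n : ℕ) (hM : 2 ≤ M) (hn : 1 ≤ n)
    (μ : Fin M → Measure Ω) (hprob : ∀ j, IsProbabilityMeasure (μ j))
    (hac : ∀ i j, μ i ≪ μ j)
    (hfin : ∀ i j, Integrable (fun x => Real.log ((μ i).rnDeriv (μ j) x).toReal) (μ i))
    (δ : ℝ) (hδ : δ ∈ Set.Ioo (0 : ℝ) 1)
    (ψ : (Fin n → Ω) → Fin M) (hψ : Measurable ψ)
    (hcond : (n : ℝ) < (1 - δ) * Real.log M /
      ((2 / (M : ℝ) ^ 2) * ∑ i : Fin M, ∑ j ∈ Finset.univ.filter (fun j => i < j),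
        symKLdiv (μ i) (μ j))) :
    ∃ j : Fin M, ENNReal.ofReal (δ - 1 / Real.log M) ≤
      (Measure.pi fun _ : Fin n => μ j) {x | ψ x ≠ j} := by
  have : Nontrivial (Fin M) := Fin.nontrivial_iff_two_le.2 hM
  have mean_le : n * meanKLdiv μ ≤ (1 - δ) * Real.log (Fintype.card (Fin M)) :=
    mul_meanKLdiv_le_of_le_div hac n.cast_nonneg
      (mul_nonneg (sub_nonneg.2 hδ.2.le) (Real.log_natCast_nonneg _))
      (by simpa only [Fintype.card_fin] using hcond.le)
  simpa only [Fintype.card_fin] using stmt_5_general n μ hac hfin δ ψ hψ mean_le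
end

section
/- (Finite-sample form of the necessary sample-complexity bound, Proposition 1.) Let 𝔐 be a finite set (with |𝔐| ≥ 2) of adjacency matrices of simple graphs on {1,…,p} with maximum degree at most d, let θ > 0 with dθ < 1, and for E ∈ 𝔐 let μ_E be the centered Gaussian measure on ℝ^p with precision matrix I + θE. Suppose |𝔐| ≥ m^{dp/2} for some real m > 1, let δ ∈ (0,1), and let ψ : (ℝ^p)ⁿ → 𝔐 be any measurable decoder. If n < (1−δ) · log m / ( 2 ( θ/(1−dθ) )² ), then max_{E ∈ 𝔐} μ_E^{⊗n}[ ψ ≠ E ] ≥ δ − 1/log|𝔐|. -/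
open MeasureTheory Matrix

/-- The centered Gaussian density on `ℝ^p` with precision matrix `J`:
`f_J(x) = (det J)^{1/2} (2π)^{-p/2} exp(-(1/2) xᵀ J x)`. -/
noncomputable def gaussDensity {p : ℕ} (J : Matrix (Fin p) (Fin p) ℝ) (x : Fin p → ℝ) : ℝ :=
  J.det ^ ((1 : ℝ) / 2) * (2 * Real.pi) ^ (-(p : ℝ) / 2) *
    Real.exp (-(1 / 2) * (x ⬝ᵥ J.mulVec x))

/-- The centered Gaussian measure on `ℝ^p` with precision matrix `J`. -/
noncomputable def gaussMeasure {p : ℕ} (J : Matrix (Fin p) (Fin p) ℝ) :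
    Measure (Fin p → ℝ) :=
  volume.withDensity fun x => ENNReal.ofReal (gaussDensity J x)

/-!
Fano's inequality is obtained from the variational (Gibbs) lower bound on the Kullback-Leibler
divergence, tested on the decoding events against the reference law `μ₀^{⊗n}`, where `μ₀` is the
standard Gaussian. The divergence tensorizes, and a rotation diagonalising `I + θE` fixes `μ₀`, so
`KL(μ_E ‖ μ₀)` is a sum of one-dimensional divergences, each at most `(λ - 1)² / (2λ)`. Gershgorin
gives `λ ≥ 1 - dθ` for the eigenvalues of `I + θE`, while `∑ (λ - 1)²` is the squared Frobenius
norm of `θE`, at most `θ² d p`.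
-/

section KullbackLeibler

open InformationTheory ProbabilityTheory Real
open scoped ENNReal NNReal

section Product

variable {α β : Type*} [MeasurableSpace α] [MeasurableSpace β]

lemma klDiv_map_measurableEquiv (e : α ≃ᵐ β) (μ ν : Measure α)
    [IsFiniteMeasure μ] [IsFiniteMeasure ν] : klDiv (μ.map e) (ν.map e) = klDiv μ ν := by
  refine (klDiv_map_le μ ν e.measurable).antisymm ?_
  simpa only [MeasurableEquiv.map_symm_map] using
    klDiv_map_le (μ.map e) (ν.map e) e.symm.measurable

lemma klDiv_prod_right (μ ν : Measure α) (ρ : Measure β) [IsFiniteMeasure μ] [IsFiniteMeasure ν]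
    [IsProbabilityMeasure ρ] : klDiv (μ.prod ρ) (ν.prod ρ) = klDiv μ ν := by
  simpa only [Measure.compProd_const] using
    klDiv_compProd_left (μ := μ) (ν := ν) (κ := Kernel.const α ρ)

lemma klDiv_prod (μ₁ μ₂ : Measure α) (ν₁ ν₂ : Measure β)
    [IsProbabilityMeasure μ₁] [IsFiniteMeasure μ₂]
    [IsProbabilityMeasure ν₁] [IsProbabilityMeasure ν₂] :
    klDiv (μ₁.prod ν₁) (μ₂.prod ν₂) = klDiv μ₁ μ₂ + klDiv ν₁ ν₂ := by
  have chain_rule := klDiv_compProd_eq_add (μ := μ₁) (ν := μ₂)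
    (κ := Kernel.const α ν₁) (η := Kernel.const α ν₂)
  simp only [Measure.compProd_const] at chain_rule
  have swap (ν : Measure β) [IsProbabilityMeasure ν] :
      (μ₁.prod ν).map MeasurableEquiv.prodComm = ν.prod μ₁ := Measure.prod_swap
  rw [chain_rule, ← klDiv_map_measurableEquiv MeasurableEquiv.prodComm (μ₁.prod ν₁), swap, swap,
    klDiv_prod_right]

end Product

theorem klDiv_pi {ι : Type*} [Fintype ι] {α : ι → Type*} [∀ i, MeasurableSpace (α i)]
    (μ ν : ∀ i, Measure (α i)) [∀ i, IsProbabilityMeasure (μ i)]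
    [∀ i, IsProbabilityMeasure (ν i)] :
    klDiv (Measure.pi μ) (Measure.pi ν) = ∑ i, klDiv (μ i) (ν i) := by
  revert α
  refine Fintype.induction_empty_option (P := fun ι _ =>
    ∀ {α : ι → Type _} [∀ i, MeasurableSpace (α i)] (μ ν : ∀ i, Measure (α i))
      [∀ i, IsProbabilityMeasure (μ i)] [∀ i, IsProbabilityMeasure (ν i)],
      klDiv (Measure.pi μ) (Measure.pi ν) = ∑ i, klDiv (μ i) (ν i)) ?of_equiv ?empty ?option ι
  case of_equiv =>
    intro ι κ _ e ih α _ μ ν _ _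
    let := Fintype.ofEquiv κ e.symm
    rw [← (measurePreserving_piCongrLeft μ e).map_eq, ← (measurePreserving_piCongrLeft ν e).map_eq,
      klDiv_map_measurableEquiv, ih, e.sum_comp fun i => klDiv (μ i) (ν i)]
  case empty =>
    intro α _ μ ν _ _
    rw [Measure.pi_of_empty μ, Measure.pi_of_empty ν, klDiv_self, Fintype.sum_empty]
  case option =>
    intro ι _ ih α _ μ ν _ _
    rw [← Measure.pi_map_piOptionEquivProd μ, ← Measure.pi_map_piOptionEquivProd ν,
      klDiv_map_measurableEquiv, klDiv_prod, ih, Fintype.sum_option, add_comm]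

lemma klDiv_pi_const {ι : Type*} [Fintype ι] {α : Type*} [MeasurableSpace α] (μ ν : Measure α)
    [IsProbabilityMeasure μ] [IsProbabilityMeasure ν] :
    klDiv (Measure.pi fun _ : ι => μ) (Measure.pi fun _ : ι => ν) =
      Fintype.card ι * klDiv μ ν := by
  rw [klDiv_pi, Finset.sum_const, Finset.card_univ, nsmul_eq_mul]

section Fano

variable {Ω : Type*} [MeasurableSpace Ω]

lemma mul_le_klFun_add_exp_sub_one {r : ℝ} (hr : 0 ≤ r) (y : ℝ) :
    r * y ≤ klFun r + (exp y - 1) := by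
  rcases hr.eq_or_lt with rfl | hr
  · simpa [klFun_apply] using exp_nonneg y
  · have tangent := mul_le_mul_of_nonneg_left (add_one_le_exp (y - log r)) hr.le
    rw [exp_sub, exp_log hr, mul_div_cancel₀ _ hr.ne'] at tangent
    rw [klFun_apply]
    linarith

lemma integral_le_toReal_klDiv_add {P Q : Measure Ω} [IsFiniteMeasure P] [IsFiniteMeasure Q]
    (hPQ : klDiv P Q ≠ ∞) {f : Ω → ℝ} (hf : Integrable f P)
    (hexp : Integrable (fun x => exp (f x)) Q) :
    ∫ x, f x ∂P ≤ (klDiv P Q).toReal + ∫ x, (exp (f x) - 1) ∂Q := by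
  obtain ⟨hac, hllr⟩ := klDiv_ne_top_iff.1 hPQ
  have hkl := (integrable_klFun_rnDeriv_iff hac).2 hllr
  have hexp' : Integrable (fun x => exp (f x) - 1) Q := hexp.sub (integrable_const 1)
  rw [← integral_rnDeriv_smul hac, toReal_klDiv_eq_integral_klFun hac, ← integral_add hkl hexp']
  exact integral_mono ((integrable_rnDeriv_smul_iff hac).2 hf) (hkl.add hexp')
    fun x => mul_le_klFun_add_exp_sub_one ENNReal.toReal_nonneg (f x)

lemma log_mul_measureReal_le {P Q : Measure Ω} [IsProbabilityMeasure P] [IsProbabilityMeasure Q]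
    (hPQ : klDiv P Q ≠ ∞) {A : Set Ω} (hA : MeasurableSet A) {M : ℝ} (hM : 0 < M) :
    log M * P.real A ≤ (klDiv P Q).toReal + log 2 + ((M - 1) * Q.real A - 1) / 2 := by
  -- The test function is `log (M ^ 1_A / 2)`; the factor `1 / 2` keeps the `Q`-mean of its
  -- exponential below `1` as long as `Q A ≤ 1 / M`.
  have hind (c : ℝ) (μ : Measure Ω) [IsFiniteMeasure μ] : Integrable (A.indicator fun _ => c) μ :=
    (integrable_const c).indicator hA
  have hexp (x : Ω) : exp (A.indicator (fun _ => log M) x - log 2) =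
      A.indicator (fun _ => (M - 1) / 2) x + 1 / 2 := by
    by_cases hx : x ∈ A
    · simp only [Set.indicator_of_mem hx, exp_sub, exp_log hM, exp_log zero_lt_two]
      ring
    · simp only [Set.indicator_of_notMem hx, exp_sub, exp_zero, exp_log zero_lt_two, zero_add]
  have hintP : Integrable (fun x => A.indicator (fun _ => log M) x - log 2) P :=
    (hind _ P).sub (integrable_const _)
  have hintQ : Integrable (fun x => A.indicator (fun _ => (M - 1) / 2) x + 1 / 2) Q :=
    (hind _ Q).add (integrable_const _)
  have hvar := integral_le_toReal_klDiv_add hPQ hintP (by simpa only [hexp] using hintQ)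
  simp only [hexp] at hvar
  rw [integral_sub (hind _ P) (integrable_const _), integral_sub hintQ (integrable_const _),
    integral_add (hind _ Q) (integrable_const _), integral_indicator_const _ hA,
    integral_indicator_const _ hA] at hvar
  simp only [integral_const, probReal_univ, smul_eq_mul] at hvar
  linarith

theorem exists_le_measureReal_compl_of_klDiv_le {ι : Type*} [Fintype ι] [Nontrivial ι]
    (P : ι → Measure Ω) (Q : Measure Ω) [∀ i, IsProbabilityMeasure (P i)] [IsProbabilityMeasure Q]
    {A : ι → Set Ω} (hA : ∀ i, MeasurableSet (A i)) (hdisj : Pairwise (Function.onFun Disjoint A))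
    {K : ℝ≥0} (hK : ∀ i, klDiv (P i) Q ≤ K) :
    ∃ i, 1 - (K + log 2) / log (Fintype.card ι) ≤ (P i).real (A i)ᶜ := by
  set M := (Fintype.card ι : ℝ)
  have hM : 1 < M := Nat.one_lt_cast.2 Fintype.one_lt_card
  have hlog : 0 < log M := log_pos hM
  have htest (i : ι) : log M * (P i).real (A i) ≤ K + log 2 + ((M - 1) * Q.real (A i) - 1) / 2 :=
    (log_mul_measureReal_le (ne_top_of_le_ne_top ENNReal.coe_ne_top (hK i)) (hA i)
      (by linarith)).trans <| by gcongr; exact ENNReal.toReal_mono ENNReal.coe_ne_top (hK i)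
  have hQ : ∑ i, Q.real (A i) ≤ 1 := by
    rw [← measureReal_iUnion_fintype hdisj hA]
    exact measureReal_le_one
  by_contra! hcon
  have hlt (i : ι) : K + log 2 < log M * (P i).real (A i) := by
    have := hcon i
    rw [probReal_compl_eq_one_sub (hA i), sub_lt_sub_iff_left, div_lt_iff₀' hlog] at this
    exact this
  have hpos : ∑ _i : ι, (0 : ℝ) < ∑ i, ((M - 1) * Q.real (A i) - 1) :=
    Finset.sum_lt_sum_of_nonempty Finset.univ_nonempty fun i _ => by linarith [hlt i, htest i]
  simp only [Finset.sum_sub_distrib, ← Finset.mul_sum, Finset.sum_const, Finset.card_univ,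
    nsmul_eq_mul, mul_one, mul_zero] at hpos
  change 0 < (M - 1) * ∑ i, Q.real (A i) - M at hpos
  nlinarith

end Fano

end KullbackLeibler

section GaussianReal

open InformationTheory ProbabilityTheory Real
open scoped ENNReal NNReal

lemma integrable_sub_sq_gaussianReal (m c : ℝ) (v : ℝ≥0) :
    Integrable (fun x => (x - c) ^ 2) (gaussianReal m v) :=
  ((memLp_id_gaussianReal 2).sub (memLp_const c)).integrable_sq

lemma integral_sub_sq_gaussianReal (m c : ℝ) (v : ℝ≥0) :
    ∫ x, (x - c) ^ 2 ∂(gaussianReal m v) = v + (m - c) ^ 2 := by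
  have hid : MemLp (fun x : ℝ => x) 2 (gaussianReal m v) := memLp_id_gaussianReal 2
  have hmean : ∫ x, (x - c) ∂(gaussianReal m v) = m - c := by
    rw [integral_sub (hid.integrable one_le_two) (integrable_const c), integral_id_gaussianReal,
      integral_const, probReal_univ, one_smul]
  have hvar := variance_eq_sub (hid.sub (memLp_const c))
  rw [show (fun x : ℝ => x) - (fun _ => c) = fun x => x - c from rfl,
    variance_sub_const hid.1, variance_fun_id_gaussianReal, hmean] at hvar
  exact sub_eq_iff_eq_add.1 hvar.symm

lemma log_gaussianPDFReal (m : ℝ) {v : ℝ≥0} (hv : v ≠ 0) (x : ℝ) :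
    log (gaussianPDFReal m v x) = -(log (2 * π) + log v) / 2 - (x - m) ^ 2 / (2 * v) := by
  rw [gaussianPDFReal, log_mul (by positivity) (exp_ne_zero _), log_exp, log_inv,
    log_sqrt (by positivity), log_mul (by positivity) (by positivity)]
  ring

lemma llr_gaussianReal (m₁ m₂ : ℝ) {v₁ v₂ : ℝ≥0} (hv₁ : v₁ ≠ 0) (hv₂ : v₂ ≠ 0) :
    llr (gaussianReal m₁ v₁) (gaussianReal m₂ v₂) =ᵐ[gaussianReal m₁ v₁] fun x =>
      log (v₂ / v₁) / 2 + ((x - m₂) ^ 2 / (2 * v₂) - (x - m₁) ^ 2 / (2 * v₁)) := by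
  have hac₁ := gaussianReal_absolutelyContinuous m₁ hv₁
  have hac₁₂ := hac₁.trans (gaussianReal_absolutelyContinuous' m₂ hv₂)
  filter_upwards [hac₁₂ (Measure.rnDeriv_eq_div hac₁ (gaussianReal_absolutelyContinuous m₂ hv₂)),
    hac₁ (rnDeriv_gaussianReal m₁ v₁), hac₁ (rnDeriv_gaussianReal m₂ v₂)] with x hratio h₁ h₂
  rw [llr, hratio, h₁, h₂, ENNReal.toReal_div, toReal_gaussianPDF, toReal_gaussianPDF,
    log_div (gaussianPDFReal_pos _ _ _ hv₁).ne' (gaussianPDFReal_pos _ _ _ hv₂).ne',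
    log_gaussianPDFReal m₁ hv₁, log_gaussianPDFReal m₂ hv₂, log_div (by positivity) (by positivity)]
  ring

theorem klDiv_gaussianReal (m₁ m₂ : ℝ) {v₁ v₂ : ℝ≥0} (hv₁ : v₁ ≠ 0) (hv₂ : v₂ ≠ 0) :
    klDiv (gaussianReal m₁ v₁) (gaussianReal m₂ v₂) =
      ENNReal.ofReal ((log (v₂ / v₁) + (v₁ + (m₁ - m₂) ^ 2) / v₂ - 1) / 2) := by
  have hllr := llr_gaussianReal m₁ m₂ hv₁ hv₂
  have hint (c : ℝ) (w : ℝ≥0) : Integrable (fun x => (x - c) ^ 2 / (2 * w)) (gaussianReal m₁ v₁) :=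
    (integrable_sub_sq_gaussianReal m₁ c v₁).div_const _
  have hmoment (c : ℝ) (w : ℝ≥0) :
      ∫ x, (x - c) ^ 2 / (2 * w) ∂(gaussianReal m₁ v₁) = (v₁ + (m₁ - c) ^ 2) / (2 * w) := by
    rw [integral_div, integral_sub_sq_gaussianReal]
  have hquad : Integrable (fun x => (x - m₂) ^ 2 / (2 * v₂) - (x - m₁) ^ 2 / (2 * v₁))
      (gaussianReal m₁ v₁) := (hint ..).sub (hint ..)
  rw [klDiv_of_ac_of_integrable ((gaussianReal_absolutelyContinuous m₁ hv₁).trans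
      (gaussianReal_absolutelyContinuous' m₂ hv₂))
      (((integrable_const _).add hquad).congr hllr.symm), integral_congr_ae hllr,
    integral_add (integrable_const _) hquad, integral_sub (hint ..) (hint ..), hmoment, hmoment]
  simp only [integral_const, probReal_univ, one_smul, add_sub_cancel_right, sub_self]
  congr 1
  field_simp
  ring

lemma klDiv_gaussianReal_zero_le {l : ℝ} (hl : 0 < l) :
    klDiv (gaussianReal 0 l⁻¹.toNNReal) (gaussianReal 0 1) ≤
      ENNReal.ofReal ((l - 1) ^ 2 / (2 * l)) := by
  rw [klDiv_gaussianReal 0 0 (by simpa using hl) one_ne_zero, coe_toNNReal _ (inv_pos.2 hl).le]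
  refine ENNReal.ofReal_le_ofReal ?_
  calc (log ((1 : ℝ≥0) / l⁻¹) + (l⁻¹ + (0 - 0) ^ 2) / (1 : ℝ≥0) - 1) / 2
      = (log l + l⁻¹ - 1) / 2 := by simp
    _ ≤ (l - 1 + l⁻¹ - 1) / 2 := by gcongr; exact log_le_sub_one_of_pos hl
    _ = (l - 1) ^ 2 / (2 * l) := by field_simp; ring

end GaussianReal

section Eigenvalues

variable {n : Type*} [Fintype n] [DecidableEq n] {A : Matrix n n ℝ}

lemma sum_sq_eigenvalues_sub (hA : A.IsHermitian) (c : ℝ) :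
    ∑ i, (hA.eigenvalues i - c) ^ 2 = ∑ i, ∑ j, (A - c • 1) i j ^ 2 := by
  set φ := Unitary.conjStarAlgAut ℝ (Matrix n n ℝ) hA.eigenvectorUnitary
  set D : Matrix n n ℝ := diagonal fun i => hA.eigenvalues i - c
  have hconj : A - c • 1 = φ D := by
    have hD : D = diagonal hA.eigenvalues - c • 1 := by
      rw [smul_one_eq_diagonal, diagonal_sub]
    rw [hD, map_sub, map_smul, map_one]
    exact congrArg (· - c • 1) hA.spectral_theorem
  have htrace : (φ (D * D)).trace = (D * D).trace := by
    rw [Unitary.conjStarAlgAut_apply, trace_mul_comm, ← mul_assoc, Unitary.coe_star_mul_self,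
      one_mul]
  have hsymm : (A - c • 1)ᴴ = A - c • 1 := by
    rw [conjTranspose_sub, hA.eq, conjTranspose_smul, star_trivial, conjTranspose_one]
  calc ∑ i, (hA.eigenvalues i - c) ^ 2 = (D * D).trace := by
        simp only [D, diagonal_mul_diagonal, trace_diagonal, pow_two]
    _ = ((A - c • 1)ᴴ * (A - c • 1)).trace := by rw [← htrace, map_mul, hsymm, ← hconj]
    _ = ∑ i, ∑ j, (A - c • 1) i j ^ 2 := by
        rw [Finset.sum_comm]
        simp only [trace, diag, mul_apply, conjTranspose_apply, star_trivial, pow_two]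

lemma abs_eigenvalues_sub_le (hA : A.IsHermitian) {c r : ℝ}
    (hrow : ∀ i, ∑ j, |(A - c • 1) i j| ≤ r) (i : n) : |hA.eigenvalues i - c| ≤ r := by
  have heigenvalue : Module.End.HasEigenvalue (toLin' A) (hA.eigenvalues i) := by
    rw [Module.End.hasEigenvalue_iff_mem_spectrum, spectrum_toLin']
    exact hA.eigenvalues_mem_spectrum_real i
  obtain ⟨k, hk⟩ := eigenvalue_mem_ball heigenvalue
  have hoff_diag : ∑ j ∈ Finset.univ.erase k, ‖A k j‖ =
      ∑ j ∈ Finset.univ.erase k, |(A - c • 1) k j| := by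
    refine Finset.sum_congr rfl fun j hj => ?_
    rw [Matrix.sub_apply, Matrix.smul_apply, one_apply_ne (Finset.ne_of_mem_erase hj).symm,
      smul_zero, sub_zero, Real.norm_eq_abs]
  have hdiag : |A k k - c| = |(A - c • 1) k k| := by
    rw [Matrix.sub_apply, Matrix.smul_apply, one_apply_eq, smul_eq_mul, mul_one]
  calc |hA.eigenvalues i - c| ≤ |hA.eigenvalues i - A k k| + |A k k - c| := abs_sub_le ..
    _ ≤ ∑ j ∈ Finset.univ.erase k, |(A - c • 1) k j| + |(A - c • 1) k k| :=
        add_le_add (hk.trans_eq hoff_diag) hdiag.le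
    _ = ∑ j, |(A - c • 1) k j| := Finset.sum_erase_add _ _ (Finset.mem_univ k)
    _ ≤ r := hrow k

lemma one_sub_le_eigenvalues_one_add {E : Matrix n n ℝ} (hE : (1 + E).IsHermitian) {r : ℝ}
    (hrow : ∀ i, ∑ j, |E i j| ≤ r) (i : n) : 1 - r ≤ hE.eigenvalues i := by
  have hball := abs_eigenvalues_sub_le (c := 1) (r := r) hE
    (by simpa only [one_smul, add_sub_cancel_left] using hrow) i
  linarith [(abs_le.1 hball).1]

lemma posDef_one_add {E : Matrix n n ℝ} (hE : E.IsHermitian) {r : ℝ} (hr : r < 1)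
    (hrow : ∀ i, ∑ j, |E i j| ≤ r) : (1 + E).PosDef :=
  (isHermitian_one.add hE).posDef_iff_eigenvalues_pos.2 fun i =>
    (sub_pos.2 hr).trans_le (one_sub_le_eigenvalues_one_add _ hrow i)

end Eigenvalues

section Gaussian

open InformationTheory ProbabilityTheory Real
open scoped ENNReal NNReal

lemma pi_withDensity_ofReal {ι : Type*} [Fintype ι] {α : ι → Type*} [∀ i, MeasurableSpace (α i)]
    (μ : ∀ i, Measure (α i)) [∀ i, SigmaFinite (μ i)] {f : ∀ i, α i → ℝ}
    (hf : ∀ i x, 0 ≤ f i x) (hint : ∀ i, Integrable (f i) (μ i)) :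
    Measure.pi (fun i => (μ i).withDensity fun x => ENNReal.ofReal (f i x)) =
      (Measure.pi μ).withDensity fun x => ENNReal.ofReal (∏ i, f i (x i)) := by
  have (i : ι) := isFiniteMeasure_withDensity_ofReal (hint i).2
  refine Measure.pi_eq fun s hs => ?_
  have hint_restrict (i : ι) : Integrable (f i) ((μ i).restrict (s i)) := (hint i).restrict
  calc (Measure.pi μ).withDensity (fun x => ENNReal.ofReal (∏ i, f i (x i))) (Set.univ.pi s)
      = ∫⁻ x, ENNReal.ofReal (∏ i, f i (x i)) ∂(Measure.pi fun i => (μ i).restrict (s i)) := by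
        rw [withDensity_apply _ (MeasurableSet.univ_pi hs), Measure.restrict_pi_pi]
    _ = ENNReal.ofReal (∏ i, ∫ x in s i, f i x ∂(μ i)) := by
        rw [← ofReal_integral_eq_lintegral_ofReal (Integrable.fintype_prod_dep hint_restrict)
          (.of_forall fun x => Finset.prod_nonneg fun i _ => hf i (x i)),
          integral_fintype_prod_eq_prod]
    _ = ∏ i, (μ i).withDensity (fun x => ENNReal.ofReal (f i x)) (s i) := by
        rw [ENNReal.ofReal_prod_of_nonneg fun i _ => integral_nonneg (hf i)]
        refine Finset.prod_congr rfl fun i _ => ?_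
        rw [withDensity_apply _ (hs i),
          ofReal_integral_eq_lintegral_ofReal (hint_restrict i) (.of_forall (hf i))]

lemma measurePreserving_unitary_mulVec {n : Type*} [Fintype n] [DecidableEq n]
    (U : unitaryGroup n ℝ) : MeasurePreserving fun y : n → ℝ => U.1 *ᵥ y := by
  have habs : |(U.1).det| = 1 := CStarRing.norm_of_mem_unitary (det_of_mem_unitary U.2)
  have hdet : (U.1).det ≠ 0 := fun h => by simp [h] at habs
  refine ⟨by fun_prop, ?_⟩
  have hmap := map_matrix_volume_pi_eq_smul_volume_pi hdet
  rwa [abs_inv, habs, inv_one, ENNReal.ofReal_one, one_smul] at hmap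

variable {p : ℕ}

lemma continuous_gaussDensity (J : Matrix (Fin p) (Fin p) ℝ) : Continuous (gaussDensity J) := by
  unfold gaussDensity
  fun_prop

lemma gaussDensity_unitary_conj_mulVec (U : unitaryGroup (Fin p) ℝ) (J : Matrix (Fin p) (Fin p) ℝ)
    (y : Fin p → ℝ) : gaussDensity (U.1 * J * star U.1) (U.1 *ᵥ y) = gaussDensity J y := by
  have hU : star U.1 * U.1 = 1 := Unitary.coe_star_mul_self U
  have hdet : (U.1 * J * star U.1).det = J.det := by
    rw [det_mul_comm, ← mul_assoc, hU, one_mul]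
  have hquad : U.1 *ᵥ y ⬝ᵥ (U.1 * J * star U.1) *ᵥ U.1 *ᵥ y = y ⬝ᵥ J *ᵥ y := by
    rw [mulVec_mulVec, mul_assoc, hU, mul_one, ← mulVec_mulVec, dotProduct_mulVec, vecMul_mulVec,
      ← conjTranspose_eq_transpose_of_trivial, ← star_eq_conjTranspose, hU, vecMul_one]
  rw [gaussDensity, gaussDensity, hdet, hquad]

lemma gaussMeasure_unitary_conj (U : unitaryGroup (Fin p) ℝ) (J : Matrix (Fin p) (Fin p) ℝ) :
    gaussMeasure (U.1 * J * star U.1) = (gaussMeasure J).map fun y => U.1 *ᵥ y := by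
  have hmp := measurePreserving_unitary_mulVec U
  have hdens := (continuous_gaussDensity (U.1 * J * star U.1)).measurable.ennreal_ofReal
  ext s hs
  rw [Measure.map_apply hmp.measurable hs, gaussMeasure, gaussMeasure, withDensity_apply _ hs,
    withDensity_apply _ (hmp.measurable hs), ← hmp.setLIntegral_comp_preimage hs hdens]
  simp only [gaussDensity_unitary_conj_mulVec]

lemma gaussDensity_diagonal {l : Fin p → ℝ} (hl : ∀ i, 0 < l i) (y : Fin p → ℝ) :
    gaussDensity (diagonal l) y = ∏ i, gaussianPDFReal 0 (l i)⁻¹.toNNReal (y i) := by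
  have hpdf (i : Fin p) : gaussianPDFReal 0 (l i)⁻¹.toNNReal (y i) =
      l i ^ (1 / 2 : ℝ) * (2 * π) ^ (-(1 / 2) : ℝ) * exp (-(1 / 2) * (y i * (l i * y i))) := by
    have := hl i
    rw [gaussianPDFReal, coe_toNNReal _ (inv_pos.2 this).le, ← div_eq_mul_inv,
      sqrt_div (by positivity), sqrt_eq_rpow, sqrt_eq_rpow, inv_div,
      rpow_neg (by positivity), div_eq_mul_inv]
    congr 2
    field_simp
    ring
  simp only [hpdf, Finset.prod_mul_distrib, ← exp_sum, ← Finset.mul_sum, Finset.prod_const]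
  have hexponent : -(p : ℝ) / 2 = -(1 / 2) * p := by ring
  rw [gaussDensity, det_diagonal, ← finsetProd_rpow _ _ (fun i _ => (hl i).le), Finset.card_univ,
    Fintype.card_fin, ← rpow_mul_natCast (by positivity), hexponent]
  simp only [dotProduct, mulVec_diagonal]

lemma gaussMeasure_diagonal {l : Fin p → ℝ} (hl : ∀ i, 0 < l i) :
    gaussMeasure (diagonal l) = Measure.pi fun i => gaussianReal 0 (l i)⁻¹.toNNReal := by
  have hpdf (i : Fin p) : gaussianReal 0 (l i)⁻¹.toNNReal =
      volume.withDensity fun x => ENNReal.ofReal (gaussianPDFReal 0 (l i)⁻¹.toNNReal x) :=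
    gaussianReal_of_var_ne_zero 0 (by simpa using hl i)
  simp only [hpdf]
  rw [pi_withDensity_ofReal _ (fun _ => gaussianPDFReal_nonneg _ _)
    (fun _ => integrable_gaussianPDFReal _ _), ← volume_pi, gaussMeasure]
  simp only [gaussDensity_diagonal hl]

lemma gaussMeasure_one :
    gaussMeasure (1 : Matrix (Fin p) (Fin p) ℝ) = Measure.pi fun _ => gaussianReal 0 1 := by
  simpa only [diagonal_one, inv_one, toNNReal_one] using
    gaussMeasure_diagonal (p := p) fun _ => one_pos

lemma gaussMeasure_eq_map_pi {J : Matrix (Fin p) (Fin p) ℝ} (hJ : J.PosDef) :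
    gaussMeasure J = (Measure.pi fun i => gaussianReal 0 (hJ.1.eigenvalues i)⁻¹.toNNReal).map
      fun y => hJ.1.eigenvectorUnitary.1 *ᵥ y := by
  conv_lhs => rw [hJ.1.spectral_theorem, Unitary.conjStarAlgAut_apply]
  rw [gaussMeasure_unitary_conj, ← gaussMeasure_diagonal hJ.eigenvalues_pos]
  rfl

lemma isProbabilityMeasure_gaussMeasure {J : Matrix (Fin p) (Fin p) ℝ} (hJ : J.PosDef) :
    IsProbabilityMeasure (gaussMeasure J) := by
  rw [gaussMeasure_eq_map_pi hJ]
  exact Measure.isProbabilityMeasure_map (by fun_prop)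

lemma klDiv_gaussMeasure_one_le {J : Matrix (Fin p) (Fin p) ℝ} (hJ : J.PosDef) :
    klDiv (gaussMeasure J) (gaussMeasure 1) ≤
      ENNReal.ofReal (∑ i, (hJ.1.eigenvalues i - 1) ^ 2 / (2 * hJ.1.eigenvalues i)) := by
  have hpos := hJ.eigenvalues_pos
  have hone : gaussMeasure (1 : Matrix (Fin p) (Fin p) ℝ) =
      (Measure.pi fun _ => gaussianReal 0 1).map fun y => hJ.1.eigenvectorUnitary.1 *ᵥ y := by
    rw [← gaussMeasure_one, ← gaussMeasure_unitary_conj, mul_one,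
      Unitary.mul_star_self_of_mem hJ.1.eigenvectorUnitary.2]
  rw [gaussMeasure_eq_map_pi hJ, hone, ENNReal.ofReal_sum_of_nonneg fun i _ => by
    have := hpos i; positivity]
  calc _ ≤ klDiv (Measure.pi fun i => gaussianReal 0 (hJ.1.eigenvalues i)⁻¹.toNNReal)
        (Measure.pi fun _ => gaussianReal 0 1) := klDiv_map_le _ _ (by fun_prop)
    _ = ∑ i, klDiv (gaussianReal 0 (hJ.1.eigenvalues i)⁻¹.toNNReal) (gaussianReal 0 1) :=
        klDiv_pi _ _
    _ ≤ _ := Finset.sum_le_sum fun i _ => klDiv_gaussianReal_zero_le (hpos i)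

lemma klDiv_gaussMeasure_one_add_le {E : Matrix (Fin p) (Fin p) ℝ} (hE : E.IsHermitian) {r : ℝ}
    (hr : r < 1) (hrow : ∀ i, ∑ j, |E i j| ≤ r) :
    klDiv (gaussMeasure (1 + E)) (gaussMeasure 1) ≤
      ENNReal.ofReal ((∑ i, ∑ j, E i j ^ 2) / (2 * (1 - r))) := by
  have hJ := posDef_one_add hE hr hrow
  have := sub_pos.2 hr
  refine (klDiv_gaussMeasure_one_le hJ).trans (ENNReal.ofReal_le_ofReal ?_)
  calc ∑ i, (hJ.1.eigenvalues i - 1) ^ 2 / (2 * hJ.1.eigenvalues i)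
      ≤ ∑ i, (hJ.1.eigenvalues i - 1) ^ 2 / (2 * (1 - r)) := by
        gcongr with i
        exact one_sub_le_eigenvalues_one_add hJ.1 hrow i
    _ = (∑ i, ∑ j, E i j ^ 2) / (2 * (1 - r)) := by
        rw [← Finset.sum_div, sum_sq_eigenvalues_sub, one_smul, add_sub_cancel_left]

end Gaussian

section Decoding

open InformationTheory Real
open scoped ENNReal NNReal

variable {p : ℕ}

theorem exists_le_measureReal_compl_gaussMeasure_one_add {ι κ : Type*} [Fintype ι] [Nontrivial ι]
    [Fintype κ] {E : ι → Matrix (Fin p) (Fin p) ℝ} (hE : ∀ i, (E i).IsHermitian) {r F : ℝ}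
    (hr : r < 1) (hrow : ∀ i k, ∑ l, |E i k l| ≤ r) (hF : ∀ i, ∑ k, ∑ l, E i k l ^ 2 ≤ F)
    {A : ι → Set (κ → Fin p → ℝ)} (hA : ∀ i, MeasurableSet (A i))
    (hdisj : Pairwise (Function.onFun Disjoint A)) :
    ∃ i, 1 - (Fintype.card κ * (F / (2 * (1 - r))) + log 2) / log (Fintype.card ι) ≤
      (Measure.pi fun _ : κ => gaussMeasure (1 + E i)).real (A i)ᶜ := by
  have := sub_pos.2 hr
  have hF_nonneg : 0 ≤ F := by
    obtain ⟨i⟩ := (inferInstance : Nonempty ι)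
    exact le_trans (by positivity) (hF i)
  have hprob (i : ι) := isProbabilityMeasure_gaussMeasure (posDef_one_add (hE i) hr (hrow i))
  have hprob_one := isProbabilityMeasure_gaussMeasure (p := p) PosDef.one
  set K : ℝ≥0 := Fintype.card κ * (F / (2 * (1 - r))).toNNReal
  have hK : (K : ℝ) = Fintype.card κ * (F / (2 * (1 - r))) := by
    rw [NNReal.coe_mul, NNReal.coe_natCast, coe_toNNReal _ (by positivity)]
  have hkl (i : ι) : klDiv (Measure.pi fun _ : κ => gaussMeasure (1 + E i))
      (Measure.pi fun _ => gaussMeasure 1) ≤ K := by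
    rw [klDiv_pi_const, ENNReal.coe_mul, ENNReal.coe_natCast]
    gcongr
    refine (klDiv_gaussMeasure_one_add_le (hE i) hr (hrow i)).trans (ENNReal.ofReal_le_ofReal ?_)
    gcongr
    exact hF i
  rw [← hK]
  exact exists_le_measureReal_compl_of_klDiv_le _ _ hA hdisj hkl

lemma sum_sq_le_card_mul_of_abs_le {k l : Type*} [Fintype k] [Fintype l] {B : Matrix k l ℝ}
    {b r : ℝ} (hb : 0 ≤ b) (hentry : ∀ i j, |B i j| ≤ b) (hrow : ∀ i, ∑ j, |B i j| ≤ r) :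
    ∑ i, ∑ j, B i j ^ 2 ≤ Fintype.card k * (b * r) :=
  calc ∑ i, ∑ j, B i j ^ 2 ≤ ∑ i, ∑ j, b * |B i j| := by
        gcongr with i _ j
        rw [← sq_abs, pow_two]
        exact mul_le_mul_of_nonneg_right (hentry i j) (abs_nonneg _)
    _ ≤ ∑ _i : k, b * r := by
        simp only [← Finset.mul_sum]
        gcongr with i
        exact hrow i
    _ = Fintype.card k * (b * r) := by rw [Finset.sum_const, Finset.card_univ, nsmul_eq_mul]

lemma sub_one_div_log_le_one_sub {m a M K δ : ℝ} (hm : 0 < m) (hM : 1 < M) (hsize : m ^ a ≤ M)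
    (hδ : δ ≤ 1) (hK : K ≤ (1 - δ) * (a * log m)) :
    δ - 1 / log M ≤ 1 - (K + log 2) / log M := by
  have hlog : 0 < log M := log_pos hM
  have hlog_size : a * log m ≤ log M := by
    rw [← log_rpow hm]
    exact log_le_log (rpow_pos_of_pos hm a) hsize
  have hK' : K ≤ (1 - δ) * log M :=
    hK.trans (mul_le_mul_of_nonneg_left hlog_size (sub_nonneg.2 hδ))
  have hlog_two : log 2 ≤ 1 := by linarith [log_two_lt_d9]
  have hdiv : (K + log 2) / log M ≤ ((1 - δ) * log M + 1) / log M := by gcongr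
  rw [add_div ((1 - δ) * log M), mul_div_cancel_right₀ _ hlog.ne'] at hdiv
  linarith

lemma mul_div_two_mul_one_sub_le_of_lt {d θ δ L n q : ℝ} (hd : 0 ≤ d) (hθ : 0 ≤ θ) (hdθ : d * θ < 1)
    (hn : 0 ≤ n) (hq : 0 ≤ q) (hcond : n < (1 - δ) * L / (2 * (θ / (1 - d * θ)) ^ 2)) :
    n * (θ ^ 2 * (d * q) / (2 * (1 - d * θ))) ≤ (1 - δ) * (d * q / 2 * L) := by
  have hgap : 0 < 1 - d * θ := sub_pos.2 hdθ
  have hθ_ne : θ ≠ 0 := by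
    rintro rfl
    exact hn.not_gt (by simpa using hcond)
  have hθ_pos : 0 < θ := hθ.lt_of_ne' hθ_ne
  rw [lt_div_iff₀ (by positivity)] at hcond
  have hfrac : θ ^ 2 / (1 - d * θ) ≤ 2 * (θ / (1 - d * θ)) ^ 2 := by
    rw [div_pow, ← mul_div_assoc, div_le_div_iff₀ hgap (by positivity)]
    nlinarith [mul_nonneg (mul_nonneg (sq_nonneg θ) hgap.le) (mul_nonneg hd hθ),
      mul_nonneg (sq_nonneg θ) hgap.le]
  calc n * (θ ^ 2 * (d * q) / (2 * (1 - d * θ)))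
      = d * q / 2 * (n * (θ ^ 2 / (1 - d * θ))) := by field_simp
    _ ≤ d * q / 2 * (n * (2 * (θ / (1 - d * θ)) ^ 2)) := by gcongr
    _ ≤ d * q / 2 * ((1 - δ) * L) := by gcongr
    _ = (1 - δ) * (d * q / 2 * L) := by ring

theorem stmt_6_general {d θ : ℝ} (hdθ : d * |θ| < 1) {𝔐 : Finset (Matrix (Fin p) (Fin p) ℝ)}
    (hcard : 2 ≤ 𝔐.card) (hherm : ∀ E ∈ 𝔐, E.IsHermitian) (hentry : ∀ E ∈ 𝔐, ∀ i j, |E i j| ≤ 1)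
    (hrow : ∀ E ∈ 𝔐, ∀ i, ∑ j, |E i j| ≤ d) {m : ℝ} (hm : 1 < m)
    (hsize : m ^ (d * p / 2) ≤ 𝔐.card) {n : ℕ} {δ : ℝ}
    {ψ : (Fin n → Fin p → ℝ) → Matrix (Fin p) (Fin p) ℝ}
    (hψ : ∀ E ∈ 𝔐, MeasurableSet {xs | ψ xs = E})
    (hcond : n < (1 - δ) * log m / (2 * (|θ| / (1 - d * |θ|)) ^ 2)) :
    ∃ E ∈ 𝔐, ENNReal.ofReal (δ - 1 / log 𝔐.card) ≤
      (Measure.pi fun _ : Fin n => gaussMeasure (1 + θ • E)) {xs | ψ xs ≠ E} := by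
  have : Nontrivial 𝔐 := (Finset.one_lt_card_iff_nontrivial.1 hcard).coe_sort
  have hd : 0 ≤ d := by
    obtain ⟨E, E', hne⟩ := exists_pair_ne 𝔐
    obtain ⟨i, -⟩ : ∃ i, E.1 i ≠ E'.1 i := Function.ne_iff.1 (Subtype.coe_ne_coe.2 hne)
    exact le_trans (by positivity) (hrow E E.2 i)
  have hδ : δ ≤ 1 := sub_nonneg.1 <| le_of_not_gt fun hneg =>
    (n.cast_nonneg.trans_lt hcond).not_ge <| div_nonpos_of_nonpos_of_nonneg
      (mul_nonpos_of_nonpos_of_nonneg hneg.le (log_pos hm).le) (by positivity)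
  have hrow_smul (E : 𝔐) (i : Fin p) : ∑ j, |(θ • E.1) i j| ≤ d * |θ| := by
    simp only [Matrix.smul_apply, smul_eq_mul, abs_mul, ← Finset.mul_sum]
    rw [mul_comm]
    exact mul_le_mul_of_nonneg_right (hrow E E.2 i) (abs_nonneg θ)
  have hfrob (E : 𝔐) : ∑ i, ∑ j, (θ • E.1) i j ^ 2 ≤ |θ| ^ 2 * (d * p) := by
    have hentry_smul (i j : Fin p) : |(θ • E.1) i j| ≤ |θ| := by
      rw [Matrix.smul_apply, smul_eq_mul, abs_mul]
      exact mul_le_of_le_one_right (abs_nonneg θ) (hentry E E.2 i j)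
    calc _ ≤ Fintype.card (Fin p) * (|θ| * (d * |θ|)) :=
          sum_sq_le_card_mul_of_abs_le (abs_nonneg θ) hentry_smul (hrow_smul E)
      _ = |θ| ^ 2 * (d * p) := by rw [Fintype.card_fin]; ring
  obtain ⟨E, hfano⟩ := exists_le_measureReal_compl_gaussMeasure_one_add (κ := Fin n)
    (fun E : 𝔐 => (hherm E E.2).smul (IsSelfAdjoint.all θ)) hdθ hrow_smul hfrob
    (A := fun E => {xs | ψ xs = E}) (fun E => hψ E E.2)
    fun E E' hne => Set.disjoint_left.2 fun _ h h' => hne (Subtype.ext (h.symm.trans h'))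
  rw [Fintype.card_fin, Fintype.card_coe] at hfano
  refine ⟨E, E.2, ENNReal.ofReal_le_of_le_toReal (le_trans ?_ hfano)⟩
  exact sub_one_div_log_le_one_sub (by linarith) (by exact_mod_cast hcard) hsize hδ <|
    mul_div_two_mul_one_sub_le_of_lt hd (abs_nonneg θ) hdθ n.cast_nonneg p.cast_nonneg hcond

end Decoding

section Adjacency

variable {V : Type*} (G : SimpleGraph V) [DecidableRel G.Adj]

lemma abs_adjMatrix_apply_le_one (i j : V) : |G.adjMatrix ℝ i j| ≤ 1 := by
  rw [SimpleGraph.adjMatrix_apply]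
  split_ifs <;> simp

lemma sum_abs_adjMatrix_apply [Fintype V] (i : V) : ∑ j, |G.adjMatrix ℝ i j| = G.degree i := by
  simp only [SimpleGraph.adjMatrix_apply, apply_ite abs, abs_one, abs_zero, Finset.sum_boole,
    ← SimpleGraph.neighborFinset_eq_filter, SimpleGraph.card_neighborFinset_eq_degree]

end Adjacency

/-- Finite-sample form of the necessary sample-complexity bound (Proposition 1): for a family
`𝔐` of adjacency matrices of graphs on `p` vertices of maximum degree at most `d` with
`|𝔐| ≥ m^{dp/2}` and the Gaussian measures `μ_E` with precision matrices `I + θE`, if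
`n < (1−δ) log m / (2 (θ/(1−dθ))²)`, then any measurable decoder satisfies
`max_{E∈𝔐} μ_E^{⊗n}[ψ ≠ E] ≥ δ − 1/log|𝔐|`. -/
theorem stmt_6 {p : ℕ} (d : ℕ) (θ : ℝ) (hθ : 0 < θ) (hdθ : (d : ℝ) * θ < 1)
    (𝔐 : Finset (Matrix (Fin p) (Fin p) ℝ)) (hcard : 2 ≤ 𝔐.card)
    (hgraph : ∀ E ∈ 𝔐, ∃ (G : SimpleGraph (Fin p)) (_ : DecidableRel G.Adj),
      E = G.adjMatrix ℝ ∧ ∀ v, G.degree v ≤ d)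
    (m : ℝ) (hm : 1 < m) (hsize : m ^ ((d : ℝ) * p / 2) ≤ (𝔐.card : ℝ))
    (n : ℕ) (δ : ℝ) (hδ : δ ∈ Set.Ioo (0 : ℝ) 1)
    (ψ : (Fin n → (Fin p → ℝ)) → Matrix (Fin p) (Fin p) ℝ)
    (hψ : Measurable fun xs (i j : Fin p) => ψ xs i j)
    (hcond : (n : ℝ) < (1 - δ) * Real.log m / (2 * (θ / (1 - d * θ)) ^ 2)) :
    ∃ E ∈ 𝔐, ENNReal.ofReal (δ - 1 / Real.log 𝔐.card) ≤
      (Measure.pi fun _ : Fin n => gaussMeasure (1 + θ • E)) {xs | ψ xs ≠ E} := by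
  rw [← abs_of_pos hθ] at hdθ hcond
  refine stmt_6_general hdθ hcard ?herm ?entry ?row hm hsize
    (fun E _ => hψ (measurableSet_singleton fun i j => E i j)) hcond
  all_goals
    intro E hE
    obtain ⟨G, _, rfl, hdeg⟩ := hgraph E hE
  case herm => exact (conjTranspose_eq_transpose_of_trivial _).trans G.transpose_adjMatrix
  case entry => exact abs_adjMatrix_apply_le_one G
  case row => exact fun i => (sum_abs_adjMatrix_apply G i).trans_le (by exact_mod_cast hdeg i)
end

section
/- (Correlation decay lemma.) Let G be a simple graph on a finite vertex set V with maximum degree at most d ≥ 1 and adjacency matrix E, let θ > 0 with dθ < 1/2, and set J = I + θE. Let H ⊆ F ⊆ V, write blocks of matrices with respect to index subsets, and let ζ ≥ 1 be an integer such that E[H, F∖H] · (E[F∖H, F∖H])^i · E[F∖H, V∖F] = 0 for every integer 0 ≤ i ≤ ζ−1 (this holds in particular when the graph distance in G between every vertex of H and every vertex of V∖F is large enough). Then the spectral norm satisfies ‖ J[H, F∖H] · (J[F∖H, F∖H])⁻¹ · J[F∖H, V∖F] ‖ ≤ (θd)^{ζ+2} / (1 − θd). -/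
open Matrix

/-- The spectral norm (ℓ²-operator norm) of a real matrix. -/
noncomputable def specNorm {m n : Type*} [Fintype m] [Fintype n] [DecidableEq n]
    (M : Matrix m n ℝ) : ℝ :=
  ‖LinearMap.toContinuousLinearMap (Matrix.toEuclideanLin M)‖

/-- The block of a matrix `M` indexed by two subsets `S`, `T` of its index set:
`blk M S T = M[S,T]`. -/
def blk {V : Type*} (M : Matrix V V ℝ) (S T : Finset V) : Matrix S T ℝ :=
  Matrix.of fun i j => M i.1 j.1

/-!
Expanding `(1 - B)⁻¹` to order `k` by its Neumann series, `A (1 - B)⁻¹ C` is the sum of the terms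
`A Bⁱ C` with `i < k`, all zero by hypothesis, and of the remainder `A Bᵏ (1 - B)⁻¹ C`, whose norm
is at most `‖A‖ ‖B‖ᵏ ‖C‖ / (1 - ‖B‖)`. Here `A`, `-B`, `C` are blocks of `θE`, so their norms are at
most `|θ| ‖E‖`, and `‖E‖ ≤ d` for the adjacency matrix `E` by Schur's test
(`l2_opNorm_le_sqrt_of_sum_norm_le`).
-/

lemma norm_sum_mul_sq_le {ι R : Type*} [NonUnitalSeminormedRing R] (s : Finset ι) (a x : ι → R) :
    ‖∑ j ∈ s, a j * x j‖ ^ 2 ≤ (∑ j ∈ s, ‖a j‖) * ∑ j ∈ s, ‖a j‖ * ‖x j‖ ^ 2 := by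
  calc ‖∑ j ∈ s, a j * x j‖ ^ 2 ≤ (∑ j ∈ s, ‖a j‖ * ‖x j‖) ^ 2 := by
        gcongr
        exact norm_sum_le_of_le s fun j _ => norm_mul_le _ _
    _ ≤ _ := Finset.sum_sq_le_sum_mul_sum_of_sq_le_mul s (fun j _ => norm_nonneg _)
        (fun j _ => by positivity) fun j _ => le_of_eq (by ring)

section L2OpNorm

open scoped Matrix.Norms.L2Operator

variable {𝕜 l m n : Type*} [RCLike 𝕜] [Fintype l] [Fintype m] [Fintype n] [DecidableEq m]
  [DecidableEq n]

lemma l2_opNorm_one_submatrix_le_one {f : m → n} (hf : f.Injective) :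
    ‖(1 : Matrix n n 𝕜).submatrix id f‖ ≤ 1 := by
  have isometry : ((1 : Matrix n n 𝕜).submatrix id f)ᴴ * (1 : Matrix n n 𝕜).submatrix id f = 1 := by
    rw [conjTranspose_submatrix, conjTranspose_one, ← submatrix_mul _ _ _ _ _ Function.bijective_id,
      one_mul, submatrix_one f hf]
  rw [← sq_le_one_iff₀ (norm_nonneg _), sq, ← l2_opNorm_conjTranspose_mul_self, isometry]
  exact (IsStarProjection.one _).norm_le

lemma l2_opNorm_submatrix_le {l' m' : Type*} [Fintype l'] [Fintype m'] [DecidableEq m']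
    (M : Matrix l m 𝕜) {f : l' → l} {g : m' → m} (hf : f.Injective) (hg : g.Injective) :
    ‖M.submatrix f g‖ ≤ ‖M‖ := by
  classical
  have factor : M.submatrix f g =
      ((1 : Matrix l l 𝕜).submatrix id f)ᴴ * M * (1 : Matrix m m 𝕜).submatrix id g := by
    conv_rhs => rw [conjTranspose_submatrix, conjTranspose_one, ← submatrix_id_id M,
      ← submatrix_mul _ _ _ _ _ Function.bijective_id,
      ← submatrix_mul _ _ _ _ _ Function.bijective_id, Matrix.one_mul, Matrix.mul_one]
  calc ‖M.submatrix f g‖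
      ≤ ‖((1 : Matrix l l 𝕜).submatrix id f)ᴴ‖ * ‖M‖ * ‖(1 : Matrix m m 𝕜).submatrix id g‖ := by
        rw [factor]
        grw [l2_opNorm_mul, l2_opNorm_mul]
    _ ≤ 1 * ‖M‖ * 1 := by
        rw [l2_opNorm_conjTranspose]
        gcongr
        exacts [l2_opNorm_one_submatrix_le_one hf, l2_opNorm_one_submatrix_le_one hg]
    _ = ‖M‖ := by rw [one_mul, mul_one]

lemma l2_opNorm_le_sqrt_of_sum_norm_le_s7 (M : Matrix l n 𝕜) {r c : ℝ} (hr : 0 ≤ r) (hc : 0 ≤ c)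
    (hrow : ∀ i, ∑ j, ‖M i j‖ ≤ r) (hcol : ∀ j, ∑ i, ‖M i j‖ ≤ c) : ‖M‖ ≤ √(r * c) := by
  rw [l2_opNorm_def]
  refine ContinuousLinearMap.opNorm_le_bound _ (Real.sqrt_nonneg _) fun x => ?_
  refine le_of_sq_le_sq ?_ (by positivity)
  rw [mul_pow, Real.sq_sqrt (mul_nonneg hr hc), EuclideanSpace.norm_sq_eq,
    EuclideanSpace.norm_sq_eq]
  calc ∑ i, ‖∑ j, M i j * x j‖ ^ 2
      ≤ ∑ i, (∑ j, ‖M i j‖) * ∑ j, ‖M i j‖ * ‖x j‖ ^ 2 := by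
        gcongr with i
        exact norm_sum_mul_sq_le _ _ _
    _ ≤ ∑ i, r * ∑ j, ‖M i j‖ * ‖x j‖ ^ 2 := by
        gcongr with i
        exact hrow i
    _ = r * ∑ j, (∑ i, ‖M i j‖) * ‖x j‖ ^ 2 := by
        simp only [← Finset.mul_sum, Finset.sum_mul]
        rw [Finset.sum_comm]
    _ ≤ r * ∑ j, c * ‖x j‖ ^ 2 := by
        gcongr with j
        exact hcol j
    _ = r * c * ∑ j, ‖x j‖ ^ 2 := by rw [← Finset.mul_sum, mul_assoc]

lemma l2_opNorm_adjMatrix_le_maxDegree (G : SimpleGraph m) [DecidableRel G.Adj] :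
    ‖G.adjMatrix 𝕜‖ ≤ G.maxDegree := by
  have hrow (v : m) : ∑ w, ‖G.adjMatrix 𝕜 v w‖ ≤ G.maxDegree := by
    calc ∑ w, ‖G.adjMatrix 𝕜 v w‖ = G.degree v := by
          simp [SimpleGraph.adjMatrix_apply, apply_ite, ← SimpleGraph.card_neighborFinset_eq_degree,
            SimpleGraph.neighborFinset_eq_filter]
      _ ≤ G.maxDegree := by exact_mod_cast G.degree_le_maxDegree v
  have hcol (w : m) : ∑ v, ‖G.adjMatrix 𝕜 v w‖ ≤ G.maxDegree := by
    simpa only [(G.isSymm_adjMatrix (α := 𝕜)).apply] using hrow w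
  simpa using l2_opNorm_le_sqrt_of_sum_norm_le_s7 _ (by positivity) (by positivity) hrow hcol

lemma inv_one_sub_eq_sum_add {B : Matrix m m 𝕜} (hB : ‖B‖ < 1) (k : ℕ) :
    (1 - B)⁻¹ = ∑ i ∈ Finset.range k, B ^ i + B ^ k * (1 - B)⁻¹ := by
  rw [nonsing_inv_eq_ringInverse]
  exact NormedRing.inverse_one_sub_nth_order' k hB

lemma l2_opNorm_inv_one_sub_le {B : Matrix m m 𝕜} (hB : ‖B‖ < 1) :
    ‖(1 - B)⁻¹‖ ≤ (1 - ‖B‖)⁻¹ := by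
  rw [nonsing_inv_eq_ringInverse, NormedRing.inverse_one_sub B hB]
  change ‖∑' i : ℕ, B ^ i‖ ≤ _
  linarith [tsum_geometric_le_of_norm_lt_one B hB, (IsStarProjection.one (Matrix m m 𝕜)).norm_le]

lemma l2_opNorm_mul_pow_le (A : Matrix l m 𝕜) (B : Matrix m m 𝕜) (k : ℕ) :
    ‖A * B ^ k‖ ≤ ‖A‖ * ‖B‖ ^ k := by
  induction k with
  | zero => simp
  | succ k ih =>
    rw [pow_succ, ← Matrix.mul_assoc, pow_succ, ← mul_assoc]
    grw [l2_opNorm_mul, ih]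

lemma l2_opNorm_mul_inv_one_sub_mul_le {A : Matrix l m 𝕜} {B : Matrix m m 𝕜} {C : Matrix m n 𝕜}
    {k : ℕ} (hB : ‖B‖ < 1) (hzero : ∀ i < k, A * B ^ i * C = 0) :
    ‖A * (1 - B)⁻¹ * C‖ ≤ ‖A‖ * ‖B‖ ^ k * ‖C‖ / (1 - ‖B‖) := by
  have tail : A * (1 - B)⁻¹ * C = A * B ^ k * (1 - B)⁻¹ * C := by
    have head : A * (∑ i ∈ Finset.range k, B ^ i) * C = 0 := by
      rw [Matrix.mul_sum, Matrix.sum_mul]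
      exact Finset.sum_eq_zero fun i hi => hzero i (Finset.mem_range.1 hi)
    conv_lhs => rw [inv_one_sub_eq_sum_add hB k, Matrix.mul_add, Matrix.add_mul, head, zero_add,
      ← Matrix.mul_assoc]
  calc ‖A * (1 - B)⁻¹ * C‖ ≤ ‖A * B ^ k‖ * ‖(1 - B)⁻¹‖ * ‖C‖ := by
        rw [tail]
        grw [l2_opNorm_mul, l2_opNorm_mul]
    _ ≤ ‖A‖ * ‖B‖ ^ k * (1 - ‖B‖)⁻¹ * ‖C‖ := by
        gcongr
        exacts [l2_opNorm_mul_pow_le A B k, l2_opNorm_inv_one_sub_le hB]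
    _ = ‖A‖ * ‖B‖ ^ k * ‖C‖ / (1 - ‖B‖) := by ring

lemma l2_opNorm_mul_inv_one_add_mul_le {A : Matrix l m 𝕜} {B : Matrix m m 𝕜} {C : Matrix m n 𝕜}
    {k : ℕ} (hB : ‖B‖ < 1) (hzero : ∀ i < k, A * B ^ i * C = 0) :
    ‖A * (1 + B)⁻¹ * C‖ ≤ ‖A‖ * ‖B‖ ^ k * ‖C‖ / (1 - ‖B‖) := by
  have hzero_neg (i : ℕ) (hi : i < k) : A * (-B) ^ i * C = 0 := by
    rw [← neg_one_smul 𝕜 B, smul_pow, Matrix.mul_smul, Matrix.smul_mul, hzero i hi, smul_zero]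
  simpa only [sub_neg_eq_add, norm_neg] using
    l2_opNorm_mul_inv_one_sub_mul_le (B := -B) ((norm_neg B).trans_lt hB) hzero_neg

end L2OpNorm

section Blocks

variable {V : Type*}

lemma blk_smul (c : ℝ) (M : Matrix V V ℝ) (S T : Finset V) : blk (c • M) S T = c • blk M S T :=
  rfl

variable [DecidableEq V]

lemma blk_one_add_of_disjoint (M : Matrix V V ℝ) {S T : Finset V} (hST : Disjoint S T) :
    blk (1 + M) S T = blk M S T := by
  ext i j
  simp [blk, one_apply_ne (Finset.disjoint_iff_ne.1 hST i i.2 j j.2)]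

lemma blk_one_add (M : Matrix V V ℝ) (S : Finset V) : blk (1 + M) S S = 1 + blk M S S := by
  ext i j
  simp only [blk, of_apply, Matrix.add_apply, one_apply, Subtype.ext_iff]

variable [Fintype V]

open scoped Matrix.Norms.L2Operator

lemma l2_opNorm_blk_le (M : Matrix V V ℝ) (S T : Finset V) : ‖blk M S T‖ ≤ ‖M‖ :=
  l2_opNorm_submatrix_le M Subtype.val_injective Subtype.val_injective

end Blocks

section SpecNorm

open scoped Matrix.Norms.L2Operator

variable {m n : Type*} [Fintype m] [Fintype n] [DecidableEq n]

lemma specNorm_eq_l2_opNorm (M : Matrix m n ℝ) : specNorm M = ‖M‖ :=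
  rfl

lemma specNorm_nonneg (M : Matrix m n ℝ) : 0 ≤ specNorm M :=
  norm_nonneg _

lemma specNorm_smul (c : ℝ) (M : Matrix m n ℝ) : specNorm (c • M) = |c| * specNorm M :=
  norm_smul c M

lemma specNorm_adjMatrix_le {V : Type*} [Fintype V] [DecidableEq V] (G : SimpleGraph V)
    [DecidableRel G.Adj] {d : ℕ} (hdeg : ∀ v, G.degree v ≤ d) : specNorm (G.adjMatrix ℝ) ≤ d :=
  (l2_opNorm_adjMatrix_le_maxDegree G).trans <|
    Nat.cast_le.2 (G.maxDegree_le_of_forall_degree_le d hdeg)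

lemma specNorm_blk_one_add_mul_inv_mul_le {V : Type*} [Fintype V] [DecidableEq V]
    {M : Matrix V V ℝ} (hM : specNorm M < 1) {S T U : Finset V} (hST : Disjoint S T)
    (hTU : Disjoint T U) {k : ℕ} (hzero : ∀ i < k, blk M S T * blk M T T ^ i * blk M T U = 0) :
    specNorm (blk (1 + M) S T * (blk (1 + M) T T)⁻¹ * blk (1 + M) T U) ≤
      specNorm M ^ (k + 2) / (1 - specNorm M) := by
  simp only [specNorm_eq_l2_opNorm] at hM ⊢
  rw [blk_one_add_of_disjoint M hST, blk_one_add, blk_one_add_of_disjoint M hTU]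
  calc ‖blk M S T * (1 + blk M T T)⁻¹ * blk M T U‖
      ≤ ‖blk M S T‖ * ‖blk M T T‖ ^ k * ‖blk M T U‖ / (1 - ‖blk M T T‖) :=
        l2_opNorm_mul_inv_one_add_mul_le ((l2_opNorm_blk_le M T T).trans_lt hM) hzero
    _ ≤ ‖M‖ * ‖M‖ ^ k * ‖M‖ / (1 - ‖M‖) := by
        have : 0 < 1 - ‖M‖ := sub_pos.2 hM
        gcongr <;> exact l2_opNorm_blk_le M _ _
    _ = ‖M‖ ^ (k + 2) / (1 - ‖M‖) := by ring

end SpecNorm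

theorem stmt_7_general {V : Type*} [Fintype V] [DecidableEq V] (E : Matrix V V ℝ) {δ θ : ℝ}
    (hE : specNorm E ≤ δ) (hθδ : |θ| * δ < 1) (H F : Finset V) (k : ℕ)
    (hzero : ∀ i < k, blk E H (F \ H) * blk E (F \ H) (F \ H) ^ i * blk E (F \ H) Fᶜ = 0) :
    specNorm (blk (1 + θ • E) H (F \ H) * (blk (1 + θ • E) (F \ H) (F \ H))⁻¹ *
      blk (1 + θ • E) (F \ H) Fᶜ) ≤ (|θ| * δ) ^ (k + 2) / (1 - |θ| * δ) := by
  have hM : specNorm (θ • E) ≤ |θ| * δ := by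
    rw [specNorm_smul]
    gcongr
  have hzero_smul (i : ℕ) (hi : i < k) : blk (θ • E) H (F \ H) *
      blk (θ • E) (F \ H) (F \ H) ^ i * blk (θ • E) (F \ H) Fᶜ = 0 := by
    simp only [blk_smul, smul_pow, Matrix.smul_mul, Matrix.mul_smul, hzero i hi, smul_zero]
  calc _ ≤ specNorm (θ • E) ^ (k + 2) / (1 - specNorm (θ • E)) :=
        specNorm_blk_one_add_mul_inv_mul_le (hM.trans_lt hθδ) Finset.disjoint_sdiff
          (disjoint_compl_right.mono_left Finset.sdiff_subset) hzero_smul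
    _ ≤ (|θ| * δ) ^ (k + 2) / (1 - |θ| * δ) := by
        have : 0 ≤ specNorm (θ • E) := specNorm_nonneg _
        have : 0 ≤ |θ| * δ := (specNorm_nonneg (θ • E)).trans hM
        have : 0 < 1 - |θ| * δ := sub_pos.2 hθδ
        gcongr

/-- Correlation decay lemma: for `J = I + θE` with `E` the adjacency matrix of a graph with
maximum degree at most `d`, `0 < θ`, `dθ < 1/2`, and nested subsets `H ⊆ F ⊆ V` such that
`E[H,F∖H]·E[F∖H,F∖H]^i·E[F∖H,V∖F] = 0` for all `0 ≤ i ≤ ζ−1`, one has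
`‖J[H,F∖H]·J[F∖H,F∖H]⁻¹·J[F∖H,V∖F]‖ ≤ (θd)^{ζ+2}/(1−θd)`. -/
theorem stmt_7 {V : Type*} [Fintype V] [DecidableEq V]
    (G : SimpleGraph V) [DecidableRel G.Adj] (d : ℕ) (hd : 1 ≤ d)
    (hdeg : ∀ v, G.degree v ≤ d)
    (θ : ℝ) (hθ : 0 < θ) (hdθ : (d : ℝ) * θ < 1 / 2)
    (H F : Finset V) (hHF : H ⊆ F) (ζ : ℕ) (hζ : 1 ≤ ζ)
    (hzero : ∀ i : ℕ, i ≤ ζ - 1 →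
      blk (G.adjMatrix ℝ) H (F \ H) * (blk (G.adjMatrix ℝ) (F \ H) (F \ H)) ^ i *
        blk (G.adjMatrix ℝ) (F \ H) Fᶜ = 0) :
    specNorm
      (blk (1 + θ • G.adjMatrix ℝ) H (F \ H) * (blk (1 + θ • G.adjMatrix ℝ) (F \ H) (F \ H))⁻¹ *
        blk (1 + θ • G.adjMatrix ℝ) (F \ H) Fᶜ) ≤
      (θ * d) ^ (ζ + 2) / (1 - θ * d) := by
  have hθd : |θ| * d < 1 := by rw [abs_of_pos hθ]; linarith
  simpa only [abs_of_pos hθ] using stmt_7_general (G.adjMatrix ℝ) (specNorm_adjMatrix_le G hdeg)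
    hθd H F ζ fun i hi => hzero i (Nat.le_sub_one_of_lt hi)
end
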